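/- arXiv:1912.06069 — 8 statements merged into one kernel-verified Lean document; each statement's English description precedes it below -/
import Mathlib

section
/- Let X be a compact metric space, φ: X → X a homeomorphism, F: X → ℝ a continuous function and β ∈ ℝ. The following are equivalent: (1) there exists an e^{βF}-conformal measure for φ; (2) there exists a point x ∈ X such that limsup_{k→∞} (1/k)·∑_{i=0}^{k-1} β·F(φ^i(x)) ≤ 0 and limsup_{k→∞} (1/k)·∑_{i=1}^{k} (−β·F(φ^{-i}(x))) ≤ 0; (3) there exists a point x ∈ X such that liminf_{k→∞} (1/k)·∑_{i=0}^{k-1} β·F(φ^i(x)) ≤ 0 and liminf_{k→∞} (1/k)·∑_{i=1}^{k} (−β·F(φ^{-i}(x))) ≤ 0. -/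
open MeasureTheory Filter Topology

/-- A Borel probability measure `m` is `e^{βF}`-conformal for the homeomorphism `φ` if
`∫ f dm = ∫ (f ∘ φ) e^{βF} dm` for every continuous `f : X → ℝ`. -/
def IsConformalMeasure {X : Type*} [TopologicalSpace X] [MeasurableSpace X]
    (φ : X ≃ₜ X) (F : X → ℝ) (β : ℝ) (m : Measure X) : Prop :=
  IsProbabilityMeasure m ∧
    ∀ f : X → ℝ, Continuous f →
      ∫ x, f x ∂m = ∫ x, f (φ x) * Real.exp (β * F x) ∂m

lemma aux_bdd {u : ℕ → ℝ} {C : ℝ} (hu : ∀ k, |u k| ≤ C) :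
    atTop.IsBoundedUnder (· ≤ ·) u ∧ atTop.IsBoundedUnder (· ≥ ·) u :=
  ⟨isBoundedUnder_of ⟨C, fun k => (abs_le.1 (hu k)).2⟩,
    isBoundedUnder_of ⟨-C, fun k => (abs_le.1 (hu k)).1⟩⟩

lemma aux_avg {C : ℝ} {a : ℕ → ℝ} (ha : ∀ i, |a i| ≤ C) (k : ℕ) :
    |(1 / (k : ℝ)) * ∑ i ∈ Finset.range k, a i| ≤ C := by
  have hC : 0 ≤ C := (abs_nonneg _).trans (ha 0)
  have h1 : |∑ i ∈ Finset.range k, a i| ≤ k * C := by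
    refine (Finset.abs_sum_le_sum_abs _ _).trans ?_
    refine (Finset.sum_le_sum (fun i _ => ha i)).trans ?_
    simp
  rw [abs_mul, abs_of_nonneg (by positivity : (0 : ℝ) ≤ 1 / k)]
  rcases Nat.eq_zero_or_pos k with rfl | hk
  · simpa using hC
  · have hk' : (0 : ℝ) < k := by exact_mod_cast hk
    rw [one_div, inv_mul_le_iff₀ hk']
    exact h1

lemma aux_ratio (s : ℕ → ℝ) (C : ℝ) (hC : ∀ k : ℕ, |(1 / (k : ℝ)) * s k| ≤ C)
    (h : liminf (fun k : ℕ => (1 / (k : ℝ)) * s k) atTop ≤ 0) (ε : ℝ) (hε : 0 < ε) :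
    ∃ N, Real.exp (s N) ≤ ε * ∑ n ∈ Finset.range N, Real.exp (s n) := by
  by_contra! hcon
  have hgrow : ∀ N : ℕ, Real.exp (s 0) * (1 + ε) ^ N ≤
      ∑ n ∈ Finset.range (N + 1), Real.exp (s n) := by
    intro N
    induction N with
    | zero => simp
    | succ N ih =>
      rw [Finset.sum_range_succ]
      have := hcon (N + 1)
      calc Real.exp (s 0) * (1 + ε) ^ (N + 1) = (1 + ε) * (Real.exp (s 0) * (1 + ε) ^ N) := by ring
        _ ≤ (1 + ε) * ∑ n ∈ Finset.range (N + 1), Real.exp (s n) := by gcongr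
        _ ≤ _ := by linarith
  have hlog : 0 < Real.log (1 + ε) := Real.log_pos (by linarith)
  set c := Real.log ε + s 0 with hc
  have hs : ∀ N : ℕ, c + N * Real.log (1 + ε) ≤ s (N + 1) := by
    intro N
    have h1 : ε * (Real.exp (s 0) * (1 + ε) ^ N) ≤ Real.exp (s (N + 1)) :=
      (mul_le_mul_of_nonneg_left (hgrow N) hε.le).trans (hcon (N + 1)).le
    have h2 := Real.log_le_log (by positivity) h1
    rw [Real.log_exp, Real.log_mul hε.ne' (by positivity),
      Real.log_mul (by positivity) (by positivity), Real.log_exp, Real.log_pow] at h2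
    linarith
  have ht : Tendsto (fun k : ℕ => (c - Real.log (1 + ε)) * (1 / (k : ℝ)) + Real.log (1 + ε))
      atTop (𝓝 ((c - Real.log (1 + ε)) * 0 + Real.log (1 + ε))) :=
    (tendsto_one_div_atTop_nhds_zero_nat.const_mul _).add_const _
  have hev : ∀ᶠ k : ℕ in atTop, Real.log (1 + ε) / 2 ≤ (1 / (k : ℝ)) * s k := by
    filter_upwards [ht.eventually_const_le (u := Real.log (1 + ε) / 2) (by linarith),
      eventually_ge_atTop 1] with k hk hk1
    obtain ⟨N, rfl⟩ : ∃ N, k = N + 1 := ⟨k - 1, by omega⟩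
    refine hk.trans ?_
    have h3 := mul_le_mul_of_nonneg_left (hs N)
      (by positivity : (0 : ℝ) ≤ 1 / ((N + 1 : ℕ) : ℝ))
    refine le_trans (le_of_eq ?_) h3
    push_cast
    field_simp
    ring
  have := le_liminf_of_le (aux_bdd hC).1.isCoboundedUnder_ge hev
  linarith

lemma aux_limsup {X : Type*} [MeasurableSpace X] (m : Measure X) [IsProbabilityMeasure m]
    (s : ℕ → X → ℝ) (C : ℝ) (hC : ∀ (k : ℕ) (x : X), |(1 / (k : ℝ)) * s k x| ≤ C)
    (hint : ∀ k, Integrable (fun x => Real.exp (s k x)) m)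
    (h1 : ∀ k, ∫ x, Real.exp (s k x) ∂m = 1) :
    ∀ᵐ x ∂m, limsup (fun k : ℕ => (1 / (k : ℝ)) * s k x) atTop ≤ 0 := by
  have hm : ∀ k : ℕ, m {x | ((k : ℝ) + 1) ^ 2 ≤ Real.exp (s k x)} ≤
      ENNReal.ofReal (1 / ((k : ℝ) + 1) ^ 2) := by
    intro k
    have h2 := mul_meas_ge_le_integral_of_nonneg
      (Eventually.of_forall fun x => (Real.exp_pos (s k x)).le) (hint k) (((k : ℝ) + 1) ^ 2)
    rw [h1] at h2
    rw [ENNReal.le_ofReal_iff_toReal_le (measure_ne_top _ _) (by positivity)]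
    rw [le_div_iff₀ (by positivity), mul_comm]
    exact h2
  have hsum : Summable (fun k : ℕ => 1 / ((k : ℝ) + 1) ^ 2) := by
    have := (summable_nat_add_iff 1).2 (Real.summable_one_div_nat_pow.2 (by norm_num : 1 < 2))
    simpa using this
  have hne : ∑' k : ℕ, m {x | ((k : ℝ) + 1) ^ 2 ≤ Real.exp (s k x)} ≠ ⊤ :=
    ne_top_of_le_ne_top hsum.tsum_ofReal_ne_top (ENNReal.tsum_le_tsum hm)
  have hlim : Tendsto (fun k : ℕ => 4 * (Real.log ((k : ℝ) + 1) / ((k : ℝ) + 1))) atTop (𝓝 0) := by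
    have h3 : Tendsto (fun x : ℝ => Real.log x / x) atTop (𝓝 0) :=
      Real.isLittleO_log_id_atTop.tendsto_div_nhds_zero
    have h4 : Tendsto (fun k : ℕ => (k : ℝ) + 1) atTop atTop :=
      tendsto_atTop_add_const_right _ _ tendsto_natCast_atTop_atTop
    simpa using (h3.comp h4).const_mul 4
  filter_upwards [ae_eventually_notMem hne] with x hx
  have hb := aux_bdd (fun k => hC k x)
  rw [← hlim.limsup_eq]
  refine limsup_le_limsup ?_ hb.2.isCoboundedUnder_le hlim.isBoundedUnder_le
  filter_upwards [hx, eventually_ge_atTop 1] with k hk hk1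
  simp only [not_le] at hk
  have h5 : s k x ≤ 2 * Real.log ((k : ℝ) + 1) := by
    have := Real.log_le_log (Real.exp_pos _) hk.le
    rw [Real.log_exp, Real.log_pow] at this
    exact_mod_cast this
  have hk' : (1 : ℝ) ≤ k := by exact_mod_cast hk1
  have h6 : 1 / (k : ℝ) ≤ 2 / ((k : ℝ) + 1) := by
    rw [div_le_div_iff₀ (by positivity) (by positivity)]; linarith
  have h7 : 0 ≤ Real.log ((k : ℝ) + 1) := Real.log_nonneg (by linarith)
  calc 1 / (k : ℝ) * s k x ≤ 1 / (k : ℝ) * (2 * Real.log ((k : ℝ) + 1)) := by gcongr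
    _ ≤ 2 / ((k : ℝ) + 1) * (2 * Real.log ((k : ℝ) + 1)) := by gcongr
    _ = _ := by ring

lemma aux_measure {X : Type*} [TopologicalSpace X] [MeasurableSpace X] [BorelSpace X] [T2Space X]
    (p q : ℕ → X) (u v : ℕ → ℝ) (hu : ∀ n, 0 < u n) (hv : ∀ n, 0 < v n) (N M : ℕ) (hN : 0 < N) :
    ∃ m : Measure X, IsProbabilityMeasure m ∧ ∀ f : X → ℝ, Continuous f →
      ∫ x, f x ∂m = (∑ n ∈ Finset.range N, u n + ∑ n ∈ Finset.range M, v n)⁻¹ *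
        (∑ n ∈ Finset.range N, u n * f (p n) + ∑ n ∈ Finset.range M, v n * f (q n)) := by
  set Z := ∑ n ∈ Finset.range N, u n + ∑ n ∈ Finset.range M, v n with hZ
  have hu0 : 0 < ∑ n ∈ Finset.range N, u n :=
    Finset.sum_pos (fun n _ => hu n) (Finset.nonempty_range_iff.2 hN.ne')
  have hv0 : 0 ≤ ∑ n ∈ Finset.range M, v n := Finset.sum_nonneg (fun n _ => (hv n).le)
  have hZ0 : 0 < Z := by positivity
  refine ⟨ENNReal.ofReal Z⁻¹ • ((∑ n ∈ Finset.range N, ENNReal.ofReal (u n) • Measure.dirac (p n))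
    + ∑ n ∈ Finset.range M, ENNReal.ofReal (v n) • Measure.dirac (q n)), ⟨?_⟩, ?_⟩
  · simp only [Measure.smul_apply, Measure.add_apply, Measure.finsetSum_apply, measure_univ,
      smul_eq_mul, mul_one]
    rw [← ENNReal.ofReal_sum_of_nonneg (fun n _ => (hu n).le),
      ← ENNReal.ofReal_sum_of_nonneg (fun n _ => (hv n).le), ← ENNReal.ofReal_add hu0.le hv0, ← hZ,
      ← ENNReal.ofReal_mul (by positivity), inv_mul_cancel₀ hZ0.ne', ENNReal.ofReal_one]
  · intro f hf
    have hfm := hf.measurable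
    have hi : ∀ (a : ℝ) (y : X), Integrable f (ENNReal.ofReal a • Measure.dirac y) := fun a y =>
      (integrable_dirac' hf.measurable.stronglyMeasurable (by simp)).smul_measure ENNReal.ofReal_ne_top
    rw [integral_smul_measure, integral_add_measure, integral_finsetSum_measure (fun i _ => hi _ _),
      integral_finsetSum_measure (fun i _ => hi _ _)]
    · simp only [integral_smul_measure, integral_dirac' _ _ hf.measurable.stronglyMeasurable]
      simp [ENNReal.toReal_ofReal, (hu _).le, (hv _).le, hZ0.le]
    · exact integrable_finsetSum_measure.2 fun i _ => hi _ _
    · exact integrable_finsetSum_measure.2 fun i _ => hi _ _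

lemma aux_exists {X : Type*} [MetricSpace X] [CompactSpace X]
    [MeasurableSpace X] [BorelSpace X] (φ : X ≃ₜ X) (G : X → ℝ) (hG : Continuous G) (x : X)
    (C : ℝ) (hC : ∀ y, |G y| ≤ C)
    (h1 : liminf (fun k : ℕ =>
      (1 / (k : ℝ)) * ∑ i ∈ Finset.range k, G ((φ : X → X)^[i] x)) atTop ≤ 0)
    (h2 : liminf (fun k : ℕ =>
      (1 / (k : ℝ)) * ∑ i ∈ Finset.range k, -G ((φ.symm : X → X)^[i + 1] x)) atTop ≤ 0)
    (ε : ℝ) (hε : 0 < ε) :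
    ∃ m : Measure X, IsProbabilityMeasure m ∧ ∀ f : X → ℝ, Continuous f → ∀ K, (∀ y, |f y| ≤ K) →
      |∫ y, f y ∂m - ∫ y, f (φ y) * Real.exp (G y) ∂m| ≤ 2 * ε * K := by
  set s : ℕ → ℝ := fun k => ∑ i ∈ Finset.range k, G ((φ : X → X)^[i] x) with hs
  set t : ℕ → ℝ := fun k => ∑ i ∈ Finset.range k, -G ((φ.symm : X → X)^[i + 1] x) with ht
  obtain ⟨N, hN⟩ := aux_ratio s C (fun k => aux_avg (fun i => hC _) k) h1 ε hε
  obtain ⟨M, hM⟩ := aux_ratio t C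
    (fun k => aux_avg (fun i => by rw [abs_neg]; exact hC _) k) h2 ε hε
  have hN0 : 0 < N := by
    rcases Nat.eq_zero_or_pos N with rfl | h
    · simp at hN; exact absurd hN (not_le.2 (Real.exp_pos _))
    · exact h
  obtain ⟨m, hm, hint⟩ := aux_measure (fun n => (φ : X → X)^[n] x)
    (fun n => (φ.symm : X → X)^[n + 1] x) (fun n => Real.exp (s n)) (fun n => Real.exp (t (n + 1)))
    (fun n => Real.exp_pos _) (fun n => Real.exp_pos _) N M hN0
  refine ⟨m, hm, fun f hf K hK => ?_⟩
  rw [hint f hf, hint (fun y => f (φ y) * Real.exp (G y)) (by fun_prop)]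
  set Z := ∑ n ∈ Finset.range N, Real.exp (s n) + ∑ n ∈ Finset.range M, Real.exp (t (n + 1)) with hZ
  have hA : 1 ≤ ∑ n ∈ Finset.range N, Real.exp (s n) := by
    have : Real.exp (s 0) ≤ ∑ n ∈ Finset.range N, Real.exp (s n) :=
      Finset.single_le_sum (f := fun n => Real.exp (s n)) (fun n _ => (Real.exp_pos _).le)
        (Finset.mem_range.2 hN0)
    simpa [hs] using this
  have hB : 0 ≤ ∑ n ∈ Finset.range M, Real.exp (t (n + 1)) :=
    Finset.sum_nonneg fun n _ => (Real.exp_pos _).le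
  have hZ0 : 0 < Z := by linarith
  have hNZ : Real.exp (s N) ≤ ε * Z := hN.trans (by gcongr; linarith)
  have hMZ : Real.exp (t M) ≤ ε * Z := by
    refine hM.trans (mul_le_mul_of_nonneg_left ?_ hε.le)
    have e1 := Finset.sum_range_succ' (fun n => Real.exp (t n)) M
    rw [Finset.sum_range_succ] at e1
    have e2 : Real.exp (t 0) = 1 := by simp [ht]
    have := Real.exp_pos (t M)
    linarith
  have hK0 : 0 ≤ K := (abs_nonneg _).trans (hK x)
  have k1 : ∑ n ∈ Finset.range N, Real.exp (s n) *
        (f (φ ((φ : X → X)^[n] x)) * Real.exp (G ((φ : X → X)^[n] x))) =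
      ∑ n ∈ Finset.range N, Real.exp (s n) * f ((φ : X → X)^[n] x)
        + Real.exp (s N) * f ((φ : X → X)^[N] x) - f x := by
    have e1 := Finset.sum_range_succ' (fun n => Real.exp (s n) * f ((φ : X → X)^[n] x)) N
    rw [Finset.sum_range_succ] at e1
    have e2 : Real.exp (s 0) * f ((φ : X → X)^[0] x) = f x := by simp [hs]
    rw [e1, e2, add_sub_cancel_right]
    refine Finset.sum_congr rfl fun n _ => ?_
    have e3 : s (n + 1) = s n + G ((φ : X → X)^[n] x) := by simp only [hs, Finset.sum_range_succ]
    rw [e3, Real.exp_add, Function.iterate_succ_apply']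
    ring
  have k2 : ∑ n ∈ Finset.range M, Real.exp (t (n + 1)) *
        (f (φ ((φ.symm : X → X)^[n + 1] x)) * Real.exp (G ((φ.symm : X → X)^[n + 1] x))) =
      ∑ n ∈ Finset.range M, Real.exp (t (n + 1)) * f ((φ.symm : X → X)^[n + 1] x)
        + f x - Real.exp (t M) * f ((φ.symm : X → X)^[M] x) := by
    have e1 := Finset.sum_range_succ' (fun n => Real.exp (t n) * f ((φ.symm : X → X)^[n] x)) M
    rw [Finset.sum_range_succ] at e1
    have e2 : Real.exp (t 0) * f ((φ.symm : X → X)^[0] x) = f x := by simp [ht]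
    rw [e2] at e1
    rw [← e1, add_sub_cancel_right]
    refine Finset.sum_congr rfl fun n _ => ?_
    have e3 : t (n + 1) = t n + -G ((φ.symm : X → X)^[n + 1] x) := by
      simp only [ht, Finset.sum_range_succ]
    have e4 : φ ((φ.symm : X → X)^[n + 1] x) = (φ.symm : X → X)^[n] x := by
      rw [Function.iterate_succ_apply', Homeomorph.apply_symm_apply]
    rw [e4, e3, Real.exp_add, Real.exp_neg]
    field_simp
  rw [k1, k2, ← mul_sub, abs_mul, abs_of_pos (inv_pos.2 hZ0), inv_mul_le_iff₀ hZ0]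
  have a1 : |Real.exp (s N) * f ((φ : X → X)^[N] x)| ≤ ε * Z * K := by
    rw [abs_mul, abs_of_pos (Real.exp_pos _)]
    exact mul_le_mul hNZ (hK _) (abs_nonneg _) (by positivity)
  have a2 : |Real.exp (t M) * f ((φ.symm : X → X)^[M] x)| ≤ ε * Z * K := by
    rw [abs_mul, abs_of_pos (Real.exp_pos _)]
    exact mul_le_mul hMZ (hK _) (abs_nonneg _) (by positivity)
  rw [abs_le] at a1 a2 ⊢
  constructor <;> linarith [a1.1, a1.2, a2.1, a2.2]

lemma aux_limit {X : Type*} [MetricSpace X] [CompactSpace X]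
    [MeasurableSpace X] [BorelSpace X] (φ : X ≃ₜ X) (G : X → ℝ) (hG : Continuous G)
    (h : ∀ ε : ℝ, 0 < ε → ∃ m : Measure X, IsProbabilityMeasure m ∧
      ∀ f : X → ℝ, Continuous f → ∀ K, (∀ y, |f y| ≤ K) →
      |∫ y, f y ∂m - ∫ y, f (φ y) * Real.exp (G y) ∂m| ≤ 2 * ε * K) :
    ∃ m : Measure X, IsProbabilityMeasure m ∧ ∀ f : X → ℝ, Continuous f →
      ∫ y, f y ∂m = ∫ y, f (φ y) * Real.exp (G y) ∂m := by
  choose m hm hb using fun j : ℕ => h (1 / ((j : ℝ) + 1)) (by positivity)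
  let μ : ℕ → ProbabilityMeasure X := fun j => ⟨m j, hm j⟩
  let U : Ultrafilter ℕ := Ultrafilter.of atTop
  have hU : (U : Filter ℕ) ≤ atTop := Ultrafilter.of_le _
  obtain ⟨ν, -, hν⟩ := isCompact_univ.ultrafilter_le_nhds (U.map μ) (by simp)
  have hν' : Tendsto μ U (𝓝 ν) := hν
  rw [ProbabilityMeasure.tendsto_iff_forall_integral_tendsto] at hν'
  refine ⟨ν, inferInstance, fun f hf => ?_⟩
  have c1 := hν' (BoundedContinuousFunction.mkOfCompact ⟨f, hf⟩)
  have c2 := hν' (BoundedContinuousFunction.mkOfCompact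
    ⟨fun y => f (φ y) * Real.exp (G y), by fun_prop⟩)
  have c3 := c1.sub c2
  obtain ⟨K, hK⟩ : ∃ K, ∀ y, |f y| ≤ K := by
    obtain ⟨K, hK⟩ := isCompact_univ.exists_bound_of_continuousOn hf.continuousOn
    exact ⟨K, fun y => hK y (Set.mem_univ y)⟩
  have c4 : Tendsto (fun j : ℕ => 2 * (1 / ((j : ℝ) + 1)) * K) U (𝓝 0) := by
    have := ((tendsto_one_div_add_atTop_nhds_zero_nat (𝕜 := ℝ)).const_mul 2).mul_const K
    simp only [mul_zero, zero_mul] at this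
    exact this.mono_left hU
  have c5 : Tendsto (fun j : ℕ => ∫ y, f y ∂(m j) - ∫ y, f (φ y) * Real.exp (G y) ∂(m j)) U (𝓝 0) :=
    squeeze_zero_norm (fun j => hb j f hf K hK) c4
  have := tendsto_nhds_unique c3 c5
  exact sub_eq_zero.1 this

lemma aux_fwd {X : Type*} [MetricSpace X] [CompactSpace X]
    [MeasurableSpace X] [BorelSpace X] (φ : X ≃ₜ X) (G : X → ℝ) (hG : Continuous G)
    (m : Measure X) [IsProbabilityMeasure m]
    (h : ∀ f : X → ℝ, Continuous f → ∫ y, f y ∂m = ∫ y, f (φ y) * Real.exp (G y) ∂m) (k : ℕ) :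
    ∫ y, Real.exp (∑ i ∈ Finset.range k, G ((φ : X → X)^[i] y)) ∂m = 1 := by
  have hc : ∀ i, Continuous ((φ : X → X)^[i]) := fun i => φ.continuous.iterate i
  induction k with
  | zero => simp
  | succ k ih =>
    rw [← ih, h (fun y => Real.exp (∑ i ∈ Finset.range k, G ((φ : X → X)^[i] y)))
      (Real.continuous_exp.comp (continuous_finsetSum _ fun i _ => hG.comp (hc i)))]
    congr 1
    ext y
    rw [← Real.exp_add, Finset.sum_range_succ']
    rfl

lemma aux_bwd {X : Type*} [MetricSpace X] [CompactSpace X]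
    [MeasurableSpace X] [BorelSpace X] (φ : X ≃ₜ X) (G : X → ℝ) (hG : Continuous G)
    (m : Measure X) [IsProbabilityMeasure m]
    (h : ∀ f : X → ℝ, Continuous f → ∫ y, f y ∂m = ∫ y, f (φ y) * Real.exp (G y) ∂m) (k : ℕ) :
    ∫ y, Real.exp (∑ i ∈ Finset.range k, -G ((φ.symm : X → X)^[i + 1] y)) ∂m = 1 := by
  have hc : ∀ i, Continuous ((φ.symm : X → X)^[i]) := fun i => φ.symm.continuous.iterate i
  induction k with
  | zero => simp
  | succ k ih =>
    rw [← ih, h (fun y => Real.exp (∑ i ∈ Finset.range (k + 1), -G ((φ.symm : X → X)^[i + 1] y)))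
      (Real.continuous_exp.comp
      (continuous_finsetSum _ fun i _ => (hG.comp (hc (i + 1))).neg))]
    congr 1
    ext y
    rw [← Real.exp_add, Finset.sum_range_succ']
    simp

theorem stmt0 {X : Type*} [MetricSpace X] [CompactSpace X]
    [MeasurableSpace X] [BorelSpace X]
    (φ : X ≃ₜ X) (F : X → ℝ) (hF : Continuous F) (β : ℝ) :
    List.TFAE
      [ ∃ m : Measure X, IsConformalMeasure φ F β m,
        ∃ x : X,
          limsup (fun k : ℕ =>
              (1 / (k : ℝ)) * ∑ i ∈ Finset.range k, β * F ((φ : X → X)^[i] x)) atTop ≤ 0 ∧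
          limsup (fun k : ℕ =>
              (1 / (k : ℝ)) * ∑ i ∈ Finset.range k, -(β * F ((φ.symm : X → X)^[i + 1] x))) atTop ≤ 0,
        ∃ x : X,
          liminf (fun k : ℕ =>
              (1 / (k : ℝ)) * ∑ i ∈ Finset.range k, β * F ((φ : X → X)^[i] x)) atTop ≤ 0 ∧
          liminf (fun k : ℕ =>
              (1 / (k : ℝ)) * ∑ i ∈ Finset.range k, -(β * F ((φ.symm : X → X)^[i + 1] x))) atTop ≤ 0 ] := by
  set G : X → ℝ := fun y => β * F y with hGdef
  have hG : Continuous G := by fun_prop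
  obtain ⟨C, hC⟩ : ∃ C, ∀ y, |G y| ≤ C := by
    obtain ⟨K, hK⟩ := isCompact_univ.exists_bound_of_continuousOn hG.continuousOn
    exact ⟨K, fun y => hK y (Set.mem_univ y)⟩
  have b1 : ∀ (k : ℕ) (x : X),
      |(1 / (k : ℝ)) * ∑ i ∈ Finset.range k, G ((φ : X → X)^[i] x)| ≤ C :=
    fun k x => aux_avg (fun i => hC _) k
  have b2 : ∀ (k : ℕ) (x : X),
      |(1 / (k : ℝ)) * ∑ i ∈ Finset.range k, -G ((φ.symm : X → X)^[i + 1] x)| ≤ C :=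
    fun k x => aux_avg (fun i => by rw [abs_neg]; exact hC _) k
  tfae_have 1 → 2 := by
    rintro ⟨m, hm, h⟩
    have hi : ∀ f : X → ℝ, Continuous f → Integrable f m := fun f hf =>
      hf.integrable_of_hasCompactSupport (HasCompactSupport.of_compactSpace f)
    have a1 := aux_limsup m (fun k x => ∑ i ∈ Finset.range k, G ((φ : X → X)^[i] x)) C b1
      (fun k => hi _ (Real.continuous_exp.comp
        (continuous_finsetSum _ fun i _ => hG.comp (φ.continuous.iterate i))))
      (aux_fwd φ G hG m h)
    have a2 := aux_limsup m (fun k x => ∑ i ∈ Finset.range k, -G ((φ.symm : X → X)^[i + 1] x)) C b2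
      (fun k => hi _ (Real.continuous_exp.comp
        (continuous_finsetSum _ fun i _ => (hG.comp (φ.symm.continuous.iterate (i + 1))).neg)))
      (aux_bwd φ G hG m h)
    exact (a1.and a2).exists
  tfae_have 2 → 3 := by
    rintro ⟨x, h1, h2⟩
    have c1 := aux_bdd (fun k => b1 k x)
    have c2 := aux_bdd (fun k => b2 k x)
    exact ⟨x, (liminf_le_limsup c1.1 c1.2).trans h1, (liminf_le_limsup c2.1 c2.2).trans h2⟩
  tfae_have 3 → 1 := by
    rintro ⟨x, h1, h2⟩
    obtain ⟨m, hm, h⟩ := aux_limit φ G hG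
      (fun ε hε => aux_exists φ G hG x C hC h1 h2 ε hε)
    exact ⟨m, hm, h⟩
  tfae_finish
end

section
/- Let X be a compact metric space, φ: X → X a homeomorphism, F: X → ℝ continuous and β ∈ ℝ. Assume there is a point x ∈ X and two strictly increasing sequences of natural numbers (n_i)_{i≥1} and (m_i)_{i≥1} such that lim_{i→∞} (e^{β·S_{−n_i}(F)(x)} + e^{β·S_{m_i}(F)(x)}) / (∑_{k=−n_i}^{m_i} e^{β·S_k(F)(x)}) = 0. For each i define the linear functional L_i on C(X) by L_i(f) = (∑_{k=−n_i}^{m_i} f(φ^k(x))·e^{β·S_k(F)(x)}) / (∑_{k=−n_i}^{m_i} e^{β·S_k(F)(x)}). Then there exist an e^{βF}-conformal measure m_x on X and a strictly increasing sequence (i_j)_{j≥1} of natural numbers such that lim_{j→∞} L_{i_j}(f) = ∫_X f dm_x for every continuous f: X → ℝ. -/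
open MeasureTheory Filter Topology

/-- The iterate `φ^k` for an integer `k`. -/
noncomputable def zIter {X : Type*} [TopologicalSpace X] (φ : X ≃ₜ X) (k : ℤ) (x : X) : X :=
  if 0 ≤ k then (φ : X → X)^[k.toNat] x else (φ.symm : X → X)^[(-k).toNat] x

/-- The Birkhoff sum `S_k(F)` for `k : ℤ`:
`S_k(F) = ∑_{j=0}^{k-1} F ∘ φ^j` for `k ≥ 1`, `S_0(F) = 0`, and
`S_k(F) = −∑_{j=1}^{|k|} F ∘ φ^{−j}` for `k ≤ −1`. -/
noncomputable def birkhoffZ {X : Type*} [TopologicalSpace X]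
    (φ : X ≃ₜ X) (F : X → ℝ) (k : ℤ) (x : X) : ℝ :=
  if 0 ≤ k then ∑ j ∈ Finset.range k.toNat, F ((φ : X → X)^[j] x)
  else -∑ j ∈ Finset.range (-k).toNat, F ((φ.symm : X → X)^[j + 1] x)

theorem zIter_succ_aux {X : Type*} [TopologicalSpace X] (φ : X ≃ₜ X) (k : ℤ) (x : X) :
    zIter φ (k + 1) x = φ (zIter φ k x) := by
  rcases k with k | k
  · have h1 : (0 : ℤ) ≤ (k : ℤ) + 1 := by omega
    have h2 : ((k : ℤ) + 1).toNat = k + 1 := by omega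
    simp only [zIter, Int.ofNat_eq_natCast, h1, h2, if_true, Int.natCast_nonneg, Int.toNat_natCast,
      Function.iterate_succ_apply']
  · rw [Int.negSucc_eq]
    have h2 : ¬ (0 : ℤ) ≤ -((k : ℤ) + 1) := by omega
    have h3 : (- -((k : ℤ) + 1)).toNat = k + 1 := by omega
    rcases Nat.eq_zero_or_pos k with rfl | hk
    · simp [zIter]
    · have h1 : ¬ (0 : ℤ) ≤ -((k : ℤ) + 1) + 1 := by omega
      have h4 : (-(-((k : ℤ) + 1) + 1)).toNat = k := by omega
      simp only [zIter, h1, h2, h3, h4, if_false, Function.iterate_succ_apply',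
        Homeomorph.apply_symm_apply]

theorem birkhoffZ_succ_aux {X : Type*} [TopologicalSpace X] (φ : X ≃ₜ X) (F : X → ℝ)
    (k : ℤ) (x : X) :
    birkhoffZ φ F (k + 1) x = birkhoffZ φ F k x + F (zIter φ k x) := by
  rcases k with k | k
  · have h1 : (0 : ℤ) ≤ (k : ℤ) + 1 := by omega
    have h2 : ((k : ℤ) + 1).toNat = k + 1 := by omega
    simp only [zIter, birkhoffZ, Int.ofNat_eq_natCast, h1, h2, if_true, Int.natCast_nonneg,
      Int.toNat_natCast, Finset.sum_range_succ]
  · rw [Int.negSucc_eq]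
    have h2 : ¬ (0 : ℤ) ≤ -((k : ℤ) + 1) := by omega
    have h3 : (- -((k : ℤ) + 1)).toNat = k + 1 := by omega
    rcases Nat.eq_zero_or_pos k with rfl | hk
    · simp [zIter, birkhoffZ]
    · have h1 : ¬ (0 : ℤ) ≤ -((k : ℤ) + 1) + 1 := by omega
      have h4 : (-(-((k : ℤ) + 1) + 1)).toNat = k := by omega
      simp only [zIter, birkhoffZ, h1, h2, h3, h4, if_false, Finset.sum_range_succ]
      ring

theorem telescope_aux (u : ℤ → ℝ) (p : ℤ) (q : ℕ) :
    ∑ k ∈ Finset.Icc p (p + q), (u k - u (k + 1)) = u p - u (p + q + 1) := by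
  induction q with
  | zero => simp
  | succ q ih =>
    have : Finset.Icc p (p + (q + 1 : ℕ)) = insert (p + q + 1) (Finset.Icc p (p + q)) := by
      ext k; simp only [Finset.mem_Icc, Finset.mem_insert]; push_cast; omega
    rw [this, Finset.sum_insert (by simp only [Finset.mem_Icc]; omega), ih]
    push_cast
    rw [show p + ((q : ℤ) + 1) + 1 = p + q + 1 + 1 by ring]
    ring

theorem exists_prob_aux {X : Type*} [MetricSpace X] [CompactSpace X]
    [MeasurableSpace X] [BorelSpace X] (s : Finset ℤ) (hs : s.Nonempty) (z : ℤ → X) (w : ℤ → ℝ)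
    (hw : ∀ k, 0 < w k) :
    ∃ μ : ProbabilityMeasure X, ∀ f : X → ℝ, Continuous f →
      ∫ y, f y ∂(μ : Measure X) = (∑ k ∈ s, f (z k) * w k) / ∑ k ∈ s, w k := by
  have hZ : 0 < ∑ k ∈ s, w k := Finset.sum_pos (fun k _ => hw k) hs
  set Z := ∑ k ∈ s, w k with hZdef
  have hp : IsProbabilityMeasure
      (∑ k ∈ s, ENNReal.ofReal (w k / Z) • Measure.dirac (z k)) := by
    constructor
    simp only [Measure.coe_finsetSum, Finset.sum_apply, Measure.smul_apply, measure_univ,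
      smul_eq_mul, mul_one]
    rw [← ENNReal.ofReal_sum_of_nonneg (fun k _ => (div_pos (hw k) hZ).le), ← Finset.sum_div,
      div_self hZ.ne', ENNReal.ofReal_one]
  refine ⟨⟨_, hp⟩, fun f hf => ?_⟩
  show ∫ y, f y ∂(∑ k ∈ s, ENNReal.ofReal (w k / Z) • Measure.dirac (z k)) = _
  rw [integral_finsetSum_measure]
  · simp only [integral_smul_measure, integral_dirac, smul_eq_mul]
    rw [Finset.sum_div]
    refine Finset.sum_congr rfl fun k _ => ?_
    rw [ENNReal.toReal_ofReal (div_pos (hw k) hZ).le]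
    ring
  · intro k _
    exact (integrable_dirac (by simp)).smul_measure ENNReal.ofReal_ne_top

theorem stmt1 {X : Type*} [MetricSpace X] [CompactSpace X]
    [MeasurableSpace X] [BorelSpace X]
    (φ : X ≃ₜ X) (F : X → ℝ) (hF : Continuous F) (β : ℝ)
    (x : X) (n m : ℕ → ℕ) (hn : StrictMono n) (hm : StrictMono m)
    (hlim : Tendsto (fun i : ℕ =>
        (Real.exp (β * birkhoffZ φ F (-(n i : ℤ)) x) + Real.exp (β * birkhoffZ φ F (m i : ℤ) x)) /
          ∑ k ∈ Finset.Icc (-(n i : ℤ)) (m i : ℤ), Real.exp (β * birkhoffZ φ F k x))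
      atTop (nhds 0)) :
    ∃ (mx : Measure X) (ij : ℕ → ℕ), IsConformalMeasure φ F β mx ∧ StrictMono ij ∧
      ∀ f : X → ℝ, Continuous f →
        Tendsto (fun j : ℕ =>
            (∑ k ∈ Finset.Icc (-(n (ij j) : ℤ)) (m (ij j) : ℤ),
                f (zIter φ k x) * Real.exp (β * birkhoffZ φ F k x)) /
              ∑ k ∈ Finset.Icc (-(n (ij j) : ℤ)) (m (ij j) : ℤ),
                Real.exp (β * birkhoffZ φ F k x))
          atTop (nhds (∫ y, f y ∂mx)) := by
  classical
  set w : ℤ → ℝ := fun k => Real.exp (β * birkhoffZ φ F k x) with hwdef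
  have hw : ∀ k, 0 < w k := fun k => Real.exp_pos _
  have hne : ∀ i, (Finset.Icc (-(n i : ℤ)) (m i : ℤ)).Nonempty := fun i =>
    Finset.nonempty_Icc.2 (by omega)
  choose μ hμ using fun i => exists_prob_aux (Finset.Icc (-(n i : ℤ)) (m i : ℤ)) (hne i)
    (fun k => zIter φ k x) w hw
  obtain ⟨ν, ij, hij, hν⟩ := CompactSpace.tendsto_subseq μ
  have hconv : ∀ f : X → ℝ, Continuous f →
      Tendsto (fun j => ∫ y, f y ∂(μ (ij j) : Measure X)) atTop
        (nhds (∫ y, f y ∂(ν : Measure X))) := fun f hf =>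
    (ProbabilityMeasure.tendsto_iff_forall_integral_tendsto.1 hν)
      (BoundedContinuousFunction.mkOfCompact ⟨f, hf⟩)
  refine ⟨ν, ij, ⟨inferInstance, fun f hf => ?_⟩, hij, fun f hf => ?_⟩
  · have hg : Continuous fun y => f (φ y) * Real.exp (β * F y) := by fun_prop
    set g : X → ℝ := fun y => f (φ y) * Real.exp (β * F y) with hgdef
    obtain ⟨C, hC⟩ := isCompact_univ.exists_bound_of_continuousOn hf.continuousOn
    obtain ⟨D, hD⟩ := isCompact_univ.exists_bound_of_continuousOn hg.continuousOn
    have hstep : ∀ k, g (zIter φ k x) * w k = f (zIter φ (k + 1) x) * w (k + 1) := by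
      intro k
      simp only [hgdef, hwdef, zIter_succ_aux, birkhoffZ_succ_aux, mul_add, Real.exp_add]
      ring
    have hdiff := (hconv f hf).sub (hconv g hg)
    have hzero : Tendsto (fun j => ∫ y, f y ∂(μ (ij j) : Measure X)
        - ∫ y, g y ∂(μ (ij j) : Measure X)) atTop (nhds 0) := by
      have hb := (hlim.comp hij.tendsto_atTop).const_mul (max C D)
      rw [mul_zero] at hb
      refine squeeze_zero_norm (fun j => ?_) hb
      rw [hμ _ f hf, hμ _ g hg, ← sub_div, ← Finset.sum_sub_distrib]
      show _ ≤ max C D * ((w (-(n (ij j) : ℤ)) + w (m (ij j) : ℤ)) /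
        ∑ k ∈ Finset.Icc (-(n (ij j) : ℤ)) (m (ij j) : ℤ), w k)
      generalize ij j = i
      have hZ : 0 < ∑ k ∈ Finset.Icc (-(n i : ℤ)) (m i : ℤ), w k :=
        Finset.sum_pos (fun k _ => hw k) (hne i)
      have htel := telescope_aux (fun k => f (zIter φ k x) * w k) (-(n i : ℤ)) (n i + m i)
      rw [show -(n i : ℤ) + ((n i + m i : ℕ) : ℤ) = m i by push_cast; ring] at htel
      simp only [hstep]
      rw [htel, ← hstep, norm_div, Real.norm_of_nonneg hZ.le, ← mul_div_assoc]
      refine div_le_div_of_nonneg_right ?_ hZ.le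
      refine (norm_sub_le _ _).trans ?_
      rw [norm_mul, norm_mul, Real.norm_of_nonneg (hw _).le, Real.norm_of_nonneg (hw _).le, mul_add]
      exact add_le_add
        (mul_le_mul_of_nonneg_right ((hC _ (Set.mem_univ _)).trans (le_max_left _ _)) (hw _).le)
        (mul_le_mul_of_nonneg_right ((hD _ (Set.mem_univ _)).trans (le_max_right _ _)) (hw _).le)
    exact sub_eq_zero.1 (tendsto_nhds_unique hdiff hzero)
  · exact (hconv f hf).congr fun j => hμ _ f hf
end

section
/- Let X be a compact metric space, φ: X → X a homeomorphism and F: X → ℝ continuous. If there exists a φ-ergodic, φ-invariant Borel probability measure ν on X with ∫_X F dν = 0, then for every β ∈ ℝ there exists an e^{βF}-conformal measure for φ. -/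
open MeasureTheory Filter Topology

/-- A measure `ν` is `φ`-invariant if `ν(φ⁻¹(B)) = ν(B)` for all Borel sets `B`. -/
def IsInvariantMeasure {X : Type*} [TopologicalSpace X] [MeasurableSpace X]
    (φ : X ≃ₜ X) (ν : Measure X) : Prop :=
  ∀ B : Set X, MeasurableSet B → ν ((φ : X → X) ⁻¹' B) = ν B

/-- A measure `m` is `φ`-ergodic if every Borel set `B` with `φ⁻¹(B) = B` satisfies
`m(B) = 0` or `m(X \ B) = 0`. -/
def IsErgodicMeasure {X : Type*} [TopologicalSpace X] [MeasurableSpace X]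
    (φ : X ≃ₜ X) (m : Measure X) : Prop :=
  ∀ B : Set X, MeasurableSet B → (φ : X → X) ⁻¹' B = B → m B = 0 ∨ m Bᶜ = 0

/-- Ergodic measures with `∫ G = 0` obstruct a strictly positive coboundary-type function. -/
theorem no_strict_super {X : Type*} [MetricSpace X] [CompactSpace X]
    [MeasurableSpace X] [BorelSpace X]
    (φ : X ≃ₜ X) (G : X → ℝ) (hG : Continuous G)
    (ν : Measure X) (hprob : IsProbabilityMeasure ν)
    (hinv : IsInvariantMeasure φ ν) (herg : IsErgodicMeasure φ ν)
    (hint : ∫ x, G x ∂ν = 0) (f : X → ℝ) (hf : Continuous f)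
    (h : ∀ x, f (φ x) * Real.exp (G x) < f x) : False := by
  have hne : Nonempty X := by
    by_contra hX
    rw [not_nonempty_iff] at hX
    have h1 := hprob.measure_univ
    rw [Set.univ_eq_empty_iff.2 hX, measure_empty] at h1
    exact zero_ne_one h1
  have hmp : MeasurePreserving (φ : X → X) ν ν := by
    refine ⟨φ.continuous.measurable, ?_⟩
    ext s hs
    rw [Measure.map_apply φ.continuous.measurable hs]
    exact hinv s hs
  have hergo : Ergodic (φ : X → X) ν := by
    refine ⟨hmp, ⟨fun s hs hss => ?_⟩⟩
    rw [eventuallyConst_set']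
    rcases herg s hs hss with h0 | h0
    · left; exact ae_eq_empty.2 h0
    · right; exact ae_eq_univ.2 h0
  have hqmp := hmp.quasiMeasurePreserving
  obtain ⟨x₀, -, hx₀⟩ := isCompact_univ.exists_isMinOn Set.univ_nonempty
    (f := fun x => f x - f (φ x) * Real.exp (G x)) (by fun_prop)
  obtain ⟨x₁, -, hx₁⟩ := isCompact_univ.exists_isMaxOn Set.univ_nonempty
    (f := fun x => Real.exp (G x)) (by fun_prop)
  obtain ⟨x₂, -, hx₂⟩ := isCompact_univ.exists_isMaxOn Set.univ_nonempty
    (f := fun x => |f x|) (by fun_prop)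
  have hGi : Integrable G ν := by
    have := (BoundedContinuousFunction.mkOfCompact ⟨G, hG⟩).integrable ν
    exact this
  -- core: integrating logarithms
  have core : ∀ c : ℝ, 0 < c → (∀ᵐ x ∂ν, c ≤ |f x|) →
      ((∀ᵐ x ∂ν, Real.log (f (φ x)) + G x < Real.log (f x)) ∨
       (∀ᵐ x ∂ν, Real.log (f x) < Real.log (f (φ x)) + G x)) → False := by
    intro c hc hcf hlt
    have hum : Measurable (fun x => Real.log (f x)) := hf.measurable.log
    have hui : Integrable (fun x => Real.log (f x)) ν := by
      refine Integrable.of_bound hum.aestronglyMeasurable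
        (max (abs (Real.log c)) (abs (Real.log (abs (f x₂))))) ?_
      filter_upwards [hcf] with x hx
      rw [← Real.log_abs (f x), Real.norm_eq_abs]
      exact abs_le_max_abs_abs (Real.log_le_log hc hx)
        (Real.log_le_log (hc.trans_le hx) (hx₂ (Set.mem_univ x)))
    have hui' : Integrable (fun x => Real.log (f (φ x))) ν :=
      hmp.integrable_comp_of_integrable hui
    have heq : ∫ x, Real.log (f (φ x)) ∂ν = ∫ x, Real.log (f x) ∂ν :=
      hmp.integral_comp φ.measurableEmbedding (fun x => Real.log (f x))
    have hsum : ∫ x, (Real.log (f (φ x)) + G x) ∂ν = ∫ x, Real.log (f x) ∂ν := by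
      rw [integral_add hui' hGi, heq, hint, add_zero]
    have hadd : Integrable (fun x => Real.log (f (φ x)) + G x) ν := hui'.add hGi
    rcases hlt with hlt | hlt
    · have e := (integral_eq_iff_of_ae_le hadd hui (hlt.mono fun x hx => hx.le)).1 hsum
      have : ∀ᵐ x ∂ν, False := by
        filter_upwards [e, hlt] with x h1 h2
        exact h2.ne h1
      obtain ⟨_, hx⟩ := this.exists
      exact hx
    · have e := (integral_eq_iff_of_ae_le hui hadd (hlt.mono fun x hx => hx.le)).1 hsum.symm
      have : ∀ᵐ x ∂ν, False := by
        filter_upwards [e, hlt] with x h1 h2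
        exact h2.ne h1
      obtain ⟨_, hx⟩ := this.exists
      exact hx
  set ε := f x₀ - f (φ x₀) * Real.exp (G x₀) with hε
  have hε0 : 0 < ε := sub_pos.2 (h x₀)
  have hεx : ∀ x, ε ≤ f x - f (φ x) * Real.exp (G x) := fun x => hx₀ (Set.mem_univ x)
  have hMx : ∀ x, Real.exp (G x) ≤ Real.exp (G x₁) := fun x => hx₁ (Set.mem_univ x)
  have hsm : MeasurableSet {x | f x ≤ 0} := (isClosed_le hf continuous_const).measurableSet
  have hsub : {x | f x ≤ 0} ⊆ (φ : X → X) ⁻¹' {x | f x ≤ 0} := by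
    intro x hx
    have hx' : f x ≤ 0 := hx
    have h1 := h x
    change f (φ x) ≤ 0
    by_contra hcon
    push Not at hcon
    have := mul_pos hcon (Real.exp_pos (G x))
    linarith
  rcases hergo.ae_empty_or_univ_of_ae_le_preimage hsm.nullMeasurableSet
    hsub.eventuallyLE with h0 | h0
  · have hpos : ∀ᵐ x ∂ν, 0 < f x := by
      have h0' : ν {x | f x ≤ 0} = 0 := ae_eq_empty.1 h0
      have : ∀ᵐ x ∂ν, ¬ (f x ≤ 0) := measure_eq_zero_iff_ae_notMem.1 h0'
      exact this.mono fun x hx => not_le.1 hx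
    have hpos' : ∀ᵐ x ∂ν, 0 < f (φ x) := hqmp.ae hpos
    refine core ε hε0 ?_ (Or.inl ?_)
    · filter_upwards [hpos, hpos'] with x h1 h2
      rw [abs_of_pos h1]
      have := mul_pos h2 (Real.exp_pos (G x))
      linarith [hεx x]
    · filter_upwards [hpos, hpos'] with x h1 h2
      have := Real.log_lt_log (mul_pos h2 (Real.exp_pos (G x))) (h x)
      rwa [Real.log_mul h2.ne' (Real.exp_pos _).ne', Real.log_exp] at this
  · have hnp : ∀ᵐ x ∂ν, f x ≤ 0 := by
      have h0' : ν {x | f x ≤ 0}ᶜ = 0 := ae_eq_univ.1 h0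
      exact h0'
    have hM0 := Real.exp_pos (G x₁)
    have hneg : ∀ᵐ x ∂ν, f x ≤ -(ε / Real.exp (G x₁)) := by
      have h1 : ∀ᵐ x ∂ν, f (φ x) ≤ -(ε / Real.exp (G x₁)) := by
        filter_upwards [hnp, hqmp.ae hnp] with x h1 h2
        have h3 : ε ≤ -f (φ x) * Real.exp (G x₁) := by
          have := mul_le_mul_of_nonneg_left (hMx x) (neg_nonneg.2 h2)
          linarith [hεx x]
        have := (div_le_iff₀ hM0).2 h3
        linarith
      have h2 : ν ((φ : X → X) ⁻¹' {x | f x ≤ -(ε / Real.exp (G x₁))}ᶜ) = 0 := h1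
      rw [hinv _ (isClosed_le hf continuous_const).measurableSet.compl] at h2
      exact h2
    have hc : 0 < ε / Real.exp (G x₁) := div_pos hε0 hM0
    refine core _ hc ?_ (Or.inr ?_)
    · filter_upwards [hneg] with x h1
      rw [abs_of_neg (by linarith)]
      linarith
    · filter_upwards [hneg, hqmp.ae hneg] with x h1 h2
      have h3 : 0 < -f x := by linarith
      have h4 : 0 < -f (φ x) := by linarith
      have := Real.log_lt_log h3 (show -f x < -f (φ x) * Real.exp (G x) by linarith [h x])
      rwa [Real.log_mul h4.ne' (Real.exp_pos _).ne', Real.log_exp, Real.log_neg_eq_log,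
        Real.log_neg_eq_log] at this

/-- Hahn–Banach and Riesz: if no `f` satisfies the strict inequality, a conformal measure exists. -/
theorem exists_fixed_measure {X : Type*} [MetricSpace X] [CompactSpace X]
    [MeasurableSpace X] [BorelSpace X]
    (φ : X ≃ₜ X) (G : X → ℝ) (hG : Continuous G)
    (h : ∀ f : X → ℝ, Continuous f → (∀ x, f (φ x) * Real.exp (G x) < f x) → False) :
    ∃ m : Measure X, IsProbabilityMeasure m ∧ ∀ f : X → ℝ, Continuous f →
      ∫ x, f x ∂m = ∫ x, f (φ x) * Real.exp (G x) ∂m := by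
  let E : C(X, ℝ) := ⟨fun x => Real.exp (G x), by fun_prop⟩
  let Φ : C(X, X) := ⟨φ, φ.continuous⟩
  let T : C(X, ℝ) →ₗ[ℝ] C(X, ℝ) :=
    { toFun := fun f => f - f.comp Φ * E
      map_add' := fun f g => by ext x; simp; ring
      map_smul' := fun c f => by ext x; simp; ring }
  have hT : ∀ f x, T f x = f x - f (φ x) * Real.exp (G x) := fun f x => rfl
  let U : Set C(X, ℝ) := {g | ∀ x, 0 < g x}
  have hUo : IsOpen U := by
    have := ContinuousMap.isOpen_setOfPred_mapsTo (X := X) (Y := ℝ) isCompact_univ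
      (isOpen_Ioi (a := (0 : ℝ)))
    convert this using 1
    ext g
    simp [U, Set.MapsTo]
  have hUc : Convex ℝ U := by
    intro f hf g hg a b ha hb hab x
    have h1 := hf x
    have h2 := hg x
    simp only [ContinuousMap.add_apply, ContinuousMap.smul_apply, smul_eq_mul]
    rcases ha.eq_or_lt with rfl | ha
    · have : b = 1 := by linarith
      subst this
      simpa using h2
    · have := mul_pos ha h1
      have := mul_nonneg hb h2.le
      linarith
  have hd : Disjoint U (LinearMap.range T : Set C(X, ℝ)) := by
    rw [Set.disjoint_left]
    rintro _ hg ⟨f, rfl⟩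
    exact h f f.continuous fun x => by
      have := hg x
      rw [hT] at this
      linarith
  obtain ⟨l, u, hl1, hl2⟩ := geometric_hahn_banach_open hUc hUo
    (LinearMap.range T).convex hd
  have hu : u ≤ 0 := by simpa using hl2 0 (LinearMap.range T).zero_mem
  have hlT : ∀ f, l (T f) = 0 := by
    intro f
    by_contra hne
    have h1 := hl2 (T (((u - 1) / l (T f)) • f)) ⟨_, rfl⟩
    rw [map_smul, map_smul, smul_eq_mul, div_mul_cancel₀ _ hne] at h1
    linarith
  have hone : l 1 < 0 := (hl1 1 (fun x => by simp)).trans_le hu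
  have hnn : ∀ g : C(X, ℝ), (∀ x, 0 ≤ g x) → l g ≤ 0 := by
    intro g hg
    by_contra hcon
    push Not at hcon
    -- perturb by a small multiple of 1
    have h1 := (hl1 (g + (l g / (-l 1)) • (1 : C(X, ℝ))) (fun x => by
      have := hg x
      have : 0 < l g / (-l 1) := div_pos hcon (by linarith)
      simp only [ContinuousMap.add_apply, ContinuousMap.smul_apply, ContinuousMap.one_apply,
        smul_eq_mul]
      linarith)).trans_le hu
    rw [map_add, map_smul, smul_eq_mul] at h1
    have : l g / (-l 1) * l 1 = - l g := by
      rw [div_neg, neg_mul, div_mul_cancel₀ _ hone.ne]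
    linarith
  let Λ₀ : CompactlySupportedContinuousMap X ℝ →ₗ[ℝ] ℝ :=
    { toFun := fun f => (l 1)⁻¹ * l f.toContinuousMap
      map_add' := fun f g => by
        have : (f + g).toContinuousMap = f.toContinuousMap + g.toContinuousMap := rfl
        rw [this, map_add]; ring
      map_smul' := fun c f => by
        have : (c • f).toContinuousMap = c • f.toContinuousMap := rfl
        rw [this, map_smul]; simp; ring }
  let Λ : CompactlySupportedContinuousMap X ℝ →ₚ[ℝ] ℝ := PositiveLinearMap.mk₀ Λ₀ (by
    intro f hf
    have h1 : l f.toContinuousMap ≤ 0 := hnn _ fun x => hf x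
    exact mul_nonneg_of_nonpos_of_nonpos (inv_nonpos.2 hone.le) h1)
  have hΛ : ∀ f : C(X, ℝ), ∫ x, f x ∂(RealRMK.rieszMeasure Λ) = (l 1)⁻¹ * l f := fun f =>
    RealRMK.integral_rieszMeasure Λ (CompactlySupportedContinuousMap.continuousMapEquiv f)
  refine ⟨RealRMK.rieszMeasure Λ, ⟨?_⟩, fun f hf => ?_⟩
  · have h1 := hΛ 1
    rw [inv_mul_cancel₀ hone.ne] at h1
    simp only [ContinuousMap.one_apply, integral_const, smul_eq_mul, mul_one] at h1
    exact (ENNReal.toReal_eq_one_iff _).1 h1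
  · have h1 := hΛ ⟨f, hf⟩
    have h2 := hΛ ((⟨f, hf⟩ : C(X, ℝ)).comp Φ * E)
    have h3 := hlT ⟨f, hf⟩
    have h4 : l ⟨f, hf⟩ = l ((⟨f, hf⟩ : C(X, ℝ)).comp Φ * E) := by
      rw [← sub_eq_zero, ← map_sub]
      exact h3
    rw [← h4, ← h1] at h2
    exact h2.symm

theorem stmt5 {X : Type*} [MetricSpace X] [CompactSpace X]
    [MeasurableSpace X] [BorelSpace X]
    (φ : X ≃ₜ X) (F : X → ℝ) (hF : Continuous F)
    (ν : Measure X) (hprob : IsProbabilityMeasure ν)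
    (hinv : IsInvariantMeasure φ ν) (herg : IsErgodicMeasure φ ν)
    (hint : ∫ x, F x ∂ν = 0) :
    ∀ β : ℝ, ∃ m : Measure X, IsConformalMeasure φ F β m := by
  intro β
  exact exists_fixed_measure φ (fun x => β * F x) (by fun_prop) fun f hf h =>
    no_strict_super φ (fun x => β * F x) (by fun_prop) ν hprob hinv herg
      (by rw [integral_const_mul, hint, mul_zero]) f hf h
end

section
/- Let X be a compact metric space, φ: X → X a homeomorphism and F: X → ℝ continuous. Assume there exists an e^{βF}-conformal measure for φ for some β ≠ 0. Then there exist φ-ergodic, φ-invariant Borel probability measures ν₊ and ν₋ on X such that ∫_X F dν₊ ≥ 0 and ∫_X F dν₋ ≤ 0. Consequently, some convex combination ν of ν₊ and ν₋ is a φ-invariant Borel probability measure with ∫_X F dν = 0. -/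
open MeasureTheory Filter Topology
open scoped ENNReal

lemma aux_exists_invariant {X : Type*} [MetricSpace X] [CompactSpace X]
    [MeasurableSpace X] [BorelSpace X] (φ : X ≃ₜ X) (F : X → ℝ) (hF : Continuous F)
    (h : ∀ n : ℕ, ∃ x, 0 ≤ birkhoffSum φ F n x) :
    ∃ μ : ProbabilityMeasure X, (∀ f : C(X, ℝ), ∫ x, f (φ x) ∂(μ : Measure X) = ∫ x, f x ∂(μ : Measure X))
      ∧ 0 ≤ ∫ x, F x ∂(μ : Measure X) := by
  choose x hx using h
  let ρ : ℕ → Measure X := fun n =>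
    ((n + 1 : ℕ) : ℝ≥0∞)⁻¹ • ∑ i ∈ Finset.range (n + 1), Measure.dirac (φ^[i] (x (n + 1)))
  have hρ : ∀ n, IsProbabilityMeasure (ρ n) := fun n => ⟨by
    simp only [ρ, Measure.smul_apply, Measure.finsetSum_apply, measure_univ, Finset.sum_const,
      Finset.card_range, smul_eq_mul, nsmul_eq_mul, mul_one]
    exact ENNReal.inv_mul_cancel (by simp) (ENNReal.natCast_ne_top _)⟩
  have hint : ∀ n (f : X → ℝ), Continuous f →
      ∫ y, f y ∂(ρ n) = ((n + 1 : ℕ) : ℝ)⁻¹ * birkhoffSum φ f (n + 1) (x (n + 1)) := by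
    intro n f hf
    simp only [ρ]
    rw [integral_smul_measure, integral_finsetSum_measure]
    · simp only [birkhoffSum, integral_dirac, ENNReal.toReal_inv, ENNReal.toReal_natCast, smul_eq_mul]
    · intro i _
      exact integrable_dirac (by simp)
  let μs : ℕ → ProbabilityMeasure X := fun n => ⟨ρ n, hρ n⟩
  let u : Ultrafilter (ProbabilityMeasure X) := Ultrafilter.map μs (hyperfilter ℕ)
  have hu : Tendsto μs (hyperfilter ℕ : Filter ℕ) (𝓝 u.lim) := u.le_nhds_lim
  have hlim : ∀ f : X → ℝ, Continuous f →
      Tendsto (fun n => ((n + 1 : ℕ) : ℝ)⁻¹ * birkhoffSum φ f (n + 1) (x (n + 1)))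
        (hyperfilter ℕ : Filter ℕ) (𝓝 (∫ y, f y ∂(u.lim : Measure X))) := by
    intro f hf
    have := (ProbabilityMeasure.tendsto_iff_forall_integral_tendsto.1 hu)
      (BoundedContinuousFunction.mkOfCompact ⟨f, hf⟩)
    refine this.congr fun n => ?_
    exact hint n f hf
  refine ⟨u.lim, fun f => ?_, ?_⟩
  · have h1 := hlim (fun y => f (φ y)) (f.continuous.comp φ.continuous)
    have h2 := hlim f f.continuous
    have h3 := h1.sub h2
    have h4 : Tendsto (fun n : ℕ => ((n + 1 : ℕ) : ℝ)⁻¹ * birkhoffSum φ (fun y => f (φ y)) (n + 1) (x (n + 1)) -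
        ((n + 1 : ℕ) : ℝ)⁻¹ * birkhoffSum φ f (n + 1) (x (n + 1)))
        (hyperfilter ℕ : Filter ℕ) (𝓝 0) := by
      refine Tendsto.mono_left ?_ Nat.hyperfilter_le_atTop
      have h5 : Tendsto (fun n : ℕ => (2 * ‖f‖) * (1 / ((n : ℝ) + 1))) atTop (𝓝 0) := by
        simpa using (tendsto_one_div_add_atTop_nhds_zero_nat (𝕜 := ℝ)).const_mul (2 * ‖f‖)
      refine squeeze_zero_norm (fun n => ?_) h5
      have h6 : birkhoffSum φ (fun y => f (φ y)) (n + 1) (x (n + 1)) =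
          birkhoffSum φ f (n + 1) (φ (x (n + 1))) := by
        simp only [birkhoffSum]
        refine Finset.sum_congr rfl fun i _ => ?_
        rw [← Function.iterate_succ_apply' φ, Function.iterate_succ_apply φ]
      rw [h6, ← mul_sub, birkhoffSum_apply_sub_birkhoffSum, norm_mul, mul_comm]
      have h7 : ‖f (φ^[n+1] (x (n+1))) - f (x (n+1))‖ ≤ 2 * ‖f‖ := by
        refine (norm_sub_le _ _).trans ?_
        have := f.norm_coe_le_norm (φ^[n+1] (x (n+1)))
        have := f.norm_coe_le_norm (x (n+1))
        linarith
      have h8 : ‖((n + 1 : ℕ) : ℝ)⁻¹‖ = 1 / ((n : ℝ) + 1) := by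
        rw [Real.norm_of_nonneg (by positivity)]
        push_cast
        simp
      rw [h8]
      exact mul_le_mul_of_nonneg_right h7 (by positivity)
    exact sub_eq_zero.1 (tendsto_nhds_unique h3 h4)
  · refine ge_of_tendsto' (hlim F hF) fun n => ?_
    exact mul_nonneg (by positivity) (hx _)

lemma aux_measurePreserving {X : Type*} [MetricSpace X] [CompactSpace X]
    [MeasurableSpace X] [BorelSpace X] (φ : X ≃ₜ X) (μ : Measure X) [IsProbabilityMeasure μ] :
    MeasurePreserving φ μ μ ↔ ∀ f : C(X, ℝ), ∫ x, f (φ x) ∂μ = ∫ x, f x ∂μ := by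
  constructor
  · intro h f
    exact h.integral_comp φ.measurableEmbedding f
  · intro h
    refine ⟨φ.continuous.measurable, ?_⟩
    have : IsProbabilityMeasure (μ.map φ) :=
      Measure.isProbabilityMeasure_map φ.continuous.measurable.aemeasurable
    refine ext_of_forall_integral_eq_of_IsFiniteMeasure fun f => ?_
    rw [φ.measurableEmbedding.integral_map]
    exact h f.toContinuousMap

lemma aux_integral_comb {X : Type*} [MetricSpace X] [CompactSpace X]
    [MeasurableSpace X] [BorelSpace X] (μ ν : Measure X) [IsProbabilityMeasure μ]
    [IsProbabilityMeasure ν] (a b : ℝ≥0∞) (ha : a ≠ ∞) (hb : b ≠ ∞) (f : X → ℝ)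
    (hf : Continuous f) :
    ∫ x, f x ∂(a • μ + b • ν) = a.toReal * ∫ x, f x ∂μ + b.toReal * ∫ x, f x ∂ν := by
  have hi : ∀ (κ : Measure X) [IsProbabilityMeasure κ], Integrable f κ := fun κ _ =>
    hf.integrable_of_hasCompactSupport (HasCompactSupport.of_compactSpace f)
  rw [integral_add_measure ((hi μ).smul_measure ha) ((hi ν).smul_measure hb),
    integral_smul_measure, integral_smul_measure, smul_eq_mul, smul_eq_mul]

lemma aux_real {a b p q M : ℝ} (ha : 0 < a) (hb : 0 < b) (hab : a + b = 1) (hp : p ≤ M)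
    (hq : q ≤ M) (h : M = a * p + b * q) : p = M := by
  have h1 : a * (M - p) + b * (M - q) = 0 := by linear_combination M * hab + h
  have h2 : 0 ≤ b * (M - q) := mul_nonneg hb.le (by linarith)
  by_contra hne
  have h3 : 0 < a * (M - p) := mul_pos ha (by linarith [lt_of_le_of_ne hp hne])
  linarith

lemma aux_exists_ergodic {X : Type*} [MetricSpace X] [CompactSpace X]
    [MeasurableSpace X] [BorelSpace X] (φ : X ≃ₜ X) (F : X → ℝ) (hF : Continuous F)
    (h : ∀ n : ℕ, ∃ x, 0 ≤ birkhoffSum φ F n x) :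
    ∃ μ : Measure X, IsProbabilityMeasure μ ∧ Ergodic φ μ ∧ 0 ≤ ∫ x, F x ∂μ := by
  obtain ⟨μ₀, hμ₀, hF₀⟩ := aux_exists_invariant φ F hF h
  have hc : ∀ f : X → ℝ, Continuous f →
      Continuous fun μ : ProbabilityMeasure X => ∫ x, f x ∂(μ : Measure X) := fun f hf =>
    ProbabilityMeasure.continuous_integral_boundedContinuousFunction
      (BoundedContinuousFunction.mkOfCompact ⟨f, hf⟩)
  let S : Set (ProbabilityMeasure X) :=
    {μ | ∀ f : C(X, ℝ), ∫ x, f (φ x) ∂(μ : Measure X) = ∫ x, f x ∂(μ : Measure X)}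
  have hS : IsCompact S := by
    refine IsClosed.isCompact ?_
    have : S = ⋂ f : C(X, ℝ), {μ : ProbabilityMeasure X | ∫ x, f (φ x) ∂(μ : Measure X) = ∫ x, f x ∂(μ : Measure X)} := by
      ext; simp [S]
    rw [this]
    exact isClosed_iInter fun f =>
      isClosed_eq (hc _ (f.continuous.comp φ.continuous)) (hc _ f.continuous)
  obtain ⟨μ₁, hμ₁, hmax⟩ := hS.exists_isMaxOn ⟨μ₀, hμ₀⟩ (hc F hF).continuousOn
  let M := ∫ x, F x ∂(μ₁ : Measure X)
  have hmax' : ∀ μ ∈ S, ∫ x, F x ∂(μ : Measure X) ≤ M := fun μ hμ => hmax hμ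
  let K : Set (ProbabilityMeasure X) := S ∩ {μ | ∫ x, F x ∂(μ : Measure X) = M}
  have hK : IsCompact K := hS.inter_right (isClosed_eq (hc F hF) continuous_const)
  let T : ProbabilityMeasure X → (C(X, ℝ) → ℝ) := fun μ f => ∫ x, f x ∂(μ : Measure X)
  have hT : Continuous T := continuous_pi fun f => hc f f.continuous
  have hTinj : ∀ μ ν, T μ = T ν → μ = ν := by
    intro μ ν hμν
    refine Subtype.ext ?_
    exact ext_of_forall_integral_eq_of_IsFiniteMeasure (μ := (μ : Measure X))
      (ν := (ν : Measure X)) fun f => congrFun hμν f.toContinuousMap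
  obtain ⟨e, he⟩ := (hK.image hT).extremePoints_nonempty ⟨_, ⟨μ₁, ⟨hμ₁, rfl⟩, rfl⟩⟩
  obtain ⟨⟨ν, ⟨hνS, hνM⟩, rfl⟩, hext⟩ := he
  refine ⟨ν, inferInstance, Ergodic.of_mem_extremePoints ?_, ?_⟩
  · refine ⟨⟨(aux_measurePreserving φ _).2 hνS, inferInstance⟩, ?_⟩
    rintro ν₁ ⟨hi₁, hp₁⟩ ν₂ ⟨hi₂, hp₂⟩ ⟨a, b, ha, hb, hab, hcomb⟩
    have ha' : a ≠ ∞ := ne_top_of_le_ne_top ENNReal.one_ne_top (hab ▸ le_self_add)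
    have hb' : b ≠ ∞ := ne_top_of_le_ne_top ENNReal.one_ne_top (hab ▸ le_add_self)
    have hr : a.toReal + b.toReal = 1 := by
      rw [← ENNReal.toReal_add ha' hb', hab, ENNReal.toReal_one]
    have ha0 : 0 < a.toReal := ENNReal.toReal_pos ha.ne' ha'
    have hb0 : 0 < b.toReal := ENNReal.toReal_pos hb.ne' hb'
    have hI : ∀ f : X → ℝ, Continuous f → ∫ x, f x ∂(ν : Measure X) =
        a.toReal * ∫ x, f x ∂ν₁ + b.toReal * ∫ x, f x ∂ν₂ := fun f hf => by
      rw [← hcomb]; exact aux_integral_comb ν₁ ν₂ a b ha' hb' f hf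
    have hS₁ : (⟨ν₁, hp₁⟩ : ProbabilityMeasure X) ∈ S := (aux_measurePreserving φ ν₁).1 hi₁
    have hS₂ : (⟨ν₂, hp₂⟩ : ProbabilityMeasure X) ∈ S := (aux_measurePreserving φ ν₂).1 hi₂
    have hM₁ : ∫ x, F x ∂ν₁ ≤ M := hmax' _ hS₁
    have hM₂ : ∫ x, F x ∂ν₂ ≤ M := hmax' _ hS₂
    have hM := hI F hF
    have hνM' : ∫ x, F x ∂(ν : Measure X) = M := hνM
    have e₁ : ∫ x, F x ∂ν₁ = M :=
      aux_real ha0 hb0 hr hM₁ hM₂ (hνM'.symm.trans hM)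
    have e₂ : ∫ x, F x ∂ν₂ = M :=
      aux_real hb0 ha0 (by linarith) hM₂ hM₁ (by linarith)
    have key := hext (x₁ := T ⟨ν₁, hp₁⟩) ⟨_, ⟨hS₁, e₁⟩, rfl⟩ (x₂ := T ⟨ν₂, hp₂⟩) ⟨_, ⟨hS₂, e₂⟩, rfl⟩
      ⟨a.toReal, b.toReal, ha0, hb0, hr, by
        funext f
        exact (hI f f.continuous).symm⟩
    have := hTinj _ _ key
    rw [← this]
    rfl
  · have h1 := hmax' μ₀ hμ₀
    have hνM' : ∫ x, F x ∂(ν : Measure X) = M := hνM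
    rw [hνM']
    exact hF₀.trans h1

lemma aux_isErg {X : Type*} [MetricSpace X] 
    [MeasurableSpace X] [BorelSpace X] (φ : X ≃ₜ X) (μ : Measure X) (h : Ergodic φ μ) :
    IsInvariantMeasure φ μ ∧ IsErgodicMeasure φ μ := by
  refine ⟨fun B hB => h.measure_preimage hB.nullMeasurableSet, fun B hB hφ => ?_⟩
  exact h.measure_self_or_compl_eq_zero hB hφ

lemma aux_conformal {X : Type*} [MetricSpace X] [CompactSpace X]
    [MeasurableSpace X] [BorelSpace X] (φ : X ≃ₜ X) (F : X → ℝ) (hF : Continuous F)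
    (β : ℝ) (m : Measure X) (hm : IsConformalMeasure φ F β m) (n : ℕ) :
    (∃ x, 0 ≤ β * birkhoffSum φ F n x) ∧ (∃ x, β * birkhoffSum φ F n x ≤ 0) := by
  obtain ⟨hp, hm⟩ := hm
  have hcont : ∀ n, Continuous (birkhoffSum φ F n) := fun n => by
    unfold birkhoffSum
    exact continuous_finsetSum _ fun i _ => hF.comp (φ.continuous.iterate i)
  have hc : ∀ n, Continuous fun x => Real.exp (β * birkhoffSum φ F n x) := fun n =>
    Real.continuous_exp.comp (continuous_const.mul (hcont n))
  have h1 : ∀ n, ∫ x, Real.exp (β * birkhoffSum φ F n x) ∂m = 1 := by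
    intro n
    induction n with
    | zero => simp
    | succ n ih =>
      rw [← ih, hm _ (hc n)]
      refine integral_congr_ae (Eventually.of_forall fun x => ?_)
      simp only
      rw [← Real.exp_add, birkhoffSum_succ']
      ring_nf
  have hi : Integrable (fun x => Real.exp (β * birkhoffSum φ F n x)) m :=
    (hc n).integrable_of_hasCompactSupport (HasCompactSupport.of_compactSpace _)
  constructor
  · obtain ⟨x, hx⟩ := exists_integral_le hi
    exact ⟨x, Real.one_le_exp_iff.1 (h1 n ▸ hx)⟩
  · obtain ⟨x, hx⟩ := exists_le_integral hi
    exact ⟨x, Real.exp_le_one_iff.1 (h1 n ▸ hx)⟩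

theorem stmt6 {X : Type*} [MetricSpace X] [CompactSpace X]
    [MeasurableSpace X] [BorelSpace X]
    (φ : X ≃ₜ X) (F : X → ℝ) (hF : Continuous F)
    (β : ℝ) (hβ : β ≠ 0)
    (m : Measure X) (hm : IsConformalMeasure φ F β m) :
    ∃ νp νm : Measure X,
      IsProbabilityMeasure νp ∧ IsInvariantMeasure φ νp ∧ IsErgodicMeasure φ νp ∧
      IsProbabilityMeasure νm ∧ IsInvariantMeasure φ νm ∧ IsErgodicMeasure φ νm ∧
      0 ≤ ∫ x, F x ∂νp ∧ ∫ x, F x ∂νm ≤ 0 ∧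
      ∃ t : ℝ≥0∞, t ≤ 1 ∧
        IsProbabilityMeasure (t • νp + (1 - t) • νm) ∧
        IsInvariantMeasure φ (t • νp + (1 - t) • νm) ∧
        ∫ x, F x ∂(t • νp + (1 - t) • νm) = 0 := by
  have hpos : ∀ n : ℕ, ∃ x, 0 ≤ birkhoffSum φ F n x := fun n => by
    obtain ⟨⟨x, hx⟩, ⟨y, hy⟩⟩ := aux_conformal φ F hF β m hm n
    rcases lt_or_gt_of_ne hβ with h | h
    · exact ⟨y, by nlinarith⟩
    · exact ⟨x, by nlinarith⟩
  have hneg : ∀ n : ℕ, ∃ x, 0 ≤ birkhoffSum φ (fun x => - F x) n x := fun n => by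
    have e : ∀ x, birkhoffSum φ (fun x => - F x) n x = - birkhoffSum φ F n x := fun x => by
      simp [birkhoffSum]
    obtain ⟨⟨x, hx⟩, ⟨y, hy⟩⟩ := aux_conformal φ F hF β m hm n
    simp only [e]
    rcases lt_or_gt_of_ne hβ with h | h
    · exact ⟨x, by nlinarith⟩
    · exact ⟨y, by nlinarith⟩
  obtain ⟨νp, hp, ep, ip⟩ := aux_exists_ergodic φ F hF hpos
  obtain ⟨νm, hm', em, im⟩ := aux_exists_ergodic φ (fun x => - F x) hF.neg hneg
  rw [integral_neg] at im
  obtain ⟨vp, gp⟩ := aux_isErg φ νp ep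
  obtain ⟨vm, gm⟩ := aux_isErg φ νm em
  refine ⟨νp, νm, hp, vp, gp, hm', vm, gm, ip, by linarith, ?_⟩
  obtain ⟨s, hs0, hs1, hs⟩ : ∃ s : ℝ, 0 ≤ s ∧ s ≤ 1 ∧
      s * ∫ x, F x ∂νp + (1 - s) * ∫ x, F x ∂νm = 0 := by
    set A := ∫ x, F x ∂νp
    set B := ∫ x, F x ∂νm
    by_cases h : A - B = 0
    · refine ⟨0, le_rfl, zero_le_one, ?_⟩
      linarith
    · have h' : 0 < A - B := lt_of_le_of_ne (by linarith) (Ne.symm h)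
      refine ⟨-B / (A - B), div_nonneg im h'.le, (div_le_one h').2 (by linarith), ?_⟩
      field_simp
      ring
  have ht : ENNReal.ofReal s ≤ 1 := by simpa using hs1
  refine ⟨ENNReal.ofReal s, ht, ⟨?_⟩, fun B hB => ?_, ?_⟩
  · simp [add_tsub_cancel_of_le ht]
  · simp [vp B hB, vm B hB]
  · rw [aux_integral_comb νp νm _ _ ENNReal.ofReal_ne_top (by simp) F hF,
      ENNReal.toReal_sub_of_le ht ENNReal.one_ne_top, ENNReal.toReal_ofReal hs0,
      ENNReal.toReal_one]
    exact hs
end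

section
/- Let X be a compact metric space, φ: X → X a homeomorphism and F: X → ℝ continuous. Assume (X, φ) is uniquely ergodic, i.e. there is exactly one φ-invariant Borel probability measure μ on X. Then the following are equivalent: (i) there exists an e^{βF}-conformal measure for some β ≠ 0; (ii) there exists an e^{βF}-conformal measure for every β ∈ ℝ; (iii) ∫_X F dμ = 0. -/
open MeasureTheory Filter Topology

/-- Riesz representation on a compact space, normalised. -/
lemma exists_prob_of_positive {X : Type*} [MetricSpace X] [CompactSpace X]
    [MeasurableSpace X] [BorelSpace X] (L : C(X, ℝ) →ₗ[ℝ] ℝ)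
    (hL : ∀ f : C(X, ℝ), (∀ x, 0 ≤ f x) → 0 ≤ L f) (h1 : L 1 = 1) :
    ∃ m : Measure X, IsProbabilityMeasure m ∧ ∀ f : C(X, ℝ), ∫ x, f x ∂m = L f := by
  let L' : CompactlySupportedContinuousMap X ℝ →ₗ[ℝ] ℝ :=
    { toFun := fun f => L f.toContinuousMap
      map_add' := fun f g => L.map_add f.toContinuousMap g.toContinuousMap
      map_smul' := fun c f => L.map_smul c f.toContinuousMap }
  let Λ := PositiveLinearMap.mk₀ L' (fun f hf => hL f.toContinuousMap (fun x => CompactlySupportedContinuousMap.le_def.1 hf x))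
  have key : ∀ f : C(X, ℝ), ∫ x, f x ∂(RealRMK.rieszMeasure Λ) = L f := fun f =>
    RealRMK.integral_rieszMeasure Λ (CompactlySupportedContinuousMap.continuousMapEquiv f)
  refine ⟨RealRMK.rieszMeasure Λ, ⟨?_⟩, key⟩
  have h := key 1
  rw [h1] at h
  simp [Measure.real] at h
  exact (ENNReal.toReal_eq_one_iff _).1 h

/-- Separation: either some `g + T f` is strictly positive, or a probability measure kills the
range of `T` and is nonpositive on `g`. -/
lemma exists_prob_of_separation {X : Type*} [MetricSpace X] [CompactSpace X]
    [MeasurableSpace X] [BorelSpace X] (g : C(X, ℝ)) (T : C(X, ℝ) →ₗ[ℝ] C(X, ℝ))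
    (h : ∀ f, ¬ ∀ x, 0 < g x + T f x) :
    ∃ m : Measure X, IsProbabilityMeasure m ∧ ∫ x, g x ∂m ≤ 0 ∧ ∀ f, ∫ x, T f x ∂m = 0 := by
  have hPc : Convex ℝ {f : C(X, ℝ) | ∀ x, 0 < f x} := by
    intro a ha b hb s t hs ht hst x
    have h1 := ha x
    have h2 := hb x
    simp only [ContinuousMap.add_apply, ContinuousMap.smul_apply, smul_eq_mul]
    rcases hs.eq_or_lt with rfl | hs
    · have : t = 1 := by linarith
      subst this; linarith
    · nlinarith [mul_pos hs h1, mul_nonneg ht h2.le]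
  have hPo : IsOpen {f : C(X, ℝ) | ∀ x, 0 < f x} := by
    have := ContinuousMap.isOpen_setOfPred_mapsTo (X := X) (Y := ℝ) isCompact_univ
      (isOpen_Ioi (a := (0 : ℝ)))
    simpa [Set.MapsTo] using this
  have htc : Convex ℝ (Set.range fun f => g + T f) := by
    rintro _ ⟨a, rfl⟩ _ ⟨b, rfl⟩ s t hs ht hst
    refine ⟨s • a + t • b, ?_⟩
    simp only [map_add, map_smul, smul_add]
    have : g = s • g + t • g := by rw [← add_smul, hst, one_smul]
    nth_rewrite 1 [this]
    abel
  have hd : Disjoint {f : C(X, ℝ) | ∀ x, 0 < f x} (Set.range fun f => g + T f) := by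
    rw [Set.disjoint_left]
    rintro _ ha ⟨f, rfl⟩
    exact h f (fun x => ha x)
  obtain ⟨l, c, hP, ht⟩ := geometric_hahn_banach_open hPc hPo htc hd
  have ht' : ∀ f, c ≤ l g + l (T f) := fun f => by
    have := ht _ ⟨f, rfl⟩
    simpa using this
  have H0 : l 1 < c := hP 1 (fun x => by simp)
  have H1 : ∀ f : C(X, ℝ), (∀ x, 0 ≤ f x) → l f ≤ 0 := by
    intro f hf
    by_contra! hc
    have hs : 0 ≤ (|c| + |l 1| + 1) / l f := by positivity
    have := hP (((|c| + |l 1| + 1) / l f) • f + 1) (fun x => by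
      have := mul_nonneg hs (hf x)
      simp only [ContinuousMap.add_apply, ContinuousMap.smul_apply, smul_eq_mul,
        ContinuousMap.one_apply]
      linarith)
    rw [map_add, map_smul, smul_eq_mul, div_mul_cancel₀ _ hc.ne'] at this
    linarith [le_abs_self c, neg_abs_le (l 1)]
  have H2 : 0 ≤ c := by
    by_contra! hc
    have hs : 0 < c / l 1 := div_pos_of_neg_of_neg hc (by linarith)
    have := hP ((c / l 1) • 1) (fun x => by simpa using hs)
    rw [map_smul, smul_eq_mul, div_mul_cancel₀ _ (by linarith)] at this
    exact lt_irrefl _ this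
  have hg : c ≤ l g := by simpa using ht' 0
  have H3 : l 1 < 0 := by
    refine lt_of_le_of_ne (H1 1 (fun x => by simp)) (fun h0 => ?_)
    have := H1 (g + ‖g‖ • 1) (fun x => by
      have := g.norm_coe_le_norm x
      rw [Real.norm_eq_abs] at this
      simp only [ContinuousMap.add_apply, ContinuousMap.smul_apply, smul_eq_mul,
        ContinuousMap.one_apply]
      linarith [neg_abs_le (g x)])
    rw [map_add, map_smul, h0, smul_zero] at this
    linarith
  have H4 : ∀ f, l (T f) = 0 := by
    intro f
    by_contra hne
    have := ht' (((c - l g - 1) / l (T f)) • f)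
    rw [map_smul, map_smul, smul_eq_mul, div_mul_cancel₀ _ hne] at this
    linarith
  obtain ⟨m, hm, hmi⟩ := exists_prob_of_positive ((l 1)⁻¹ • (l : C(X, ℝ) →ₗ[ℝ] ℝ))
    (fun f hf => by
      simpa using mul_nonneg_of_nonpos_of_nonpos (inv_nonpos.2 H3.le) (H1 f hf))
    (by simpa using inv_mul_cancel₀ H3.ne)
  refine ⟨m, hm, ?_, fun f => ?_⟩
  · rw [hmi]
    simpa using mul_nonpos_of_nonpos_of_nonneg (inv_nonpos.2 H3.le) (H2.trans hg)
  · rw [hmi]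
    simp [H4]

/-- The weighted coboundary operator `f ↦ f - (f ∘ φ) w`. -/
def weightedCob {X : Type*} [TopologicalSpace X] (φ : X ≃ₜ X) (w : C(X, ℝ)) :
    C(X, ℝ) →ₗ[ℝ] C(X, ℝ) where
  toFun f := f - (f.comp ⟨φ, φ.continuous⟩) * w
  map_add' f g := by ext x; simp; ring
  map_smul' c f := by ext x; simp; ring

lemma weightedCob_apply {X : Type*} [TopologicalSpace X] (φ : X ≃ₜ X) (w f : C(X, ℝ)) (x : X) :
    weightedCob φ w f x = f x - f (φ x) * w x := rfl

lemma cont_integrable {X : Type*} [MetricSpace X] [CompactSpace X]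
    [MeasurableSpace X] [BorelSpace X] (m : Measure X) [IsProbabilityMeasure m]
    {f : X → ℝ} (hf : Continuous f) : Integrable f m :=
  hf.integrable_of_hasCompactSupport (HasCompactSupport.of_compactSpace f)

/-- Under unique ergodicity a function with positive mean is cohomologous to a positive one. -/
lemma exists_cohomologous_pos {X : Type*} [MetricSpace X] [CompactSpace X]
    [MeasurableSpace X] [BorelSpace X] (φ : X ≃ₜ X) (μ : Measure X)
    (huniq : ∀ ν : Measure X, IsProbabilityMeasure ν → IsInvariantMeasure φ ν → ν = μ)
    (g : X → ℝ) (hg : Continuous g) (hpos : 0 < ∫ x, g x ∂μ) :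
    ∃ f : C(X, ℝ), ∀ x, 0 < g x + (f x - f (φ x)) := by
  by_contra! hcon
  obtain ⟨m, hm, hm1, hm2⟩ := exists_prob_of_separation ⟨g, hg⟩ (weightedCob φ 1) (by
    intro f hf
    obtain ⟨x, hx⟩ := hcon f
    have := hf x
    simp only [weightedCob_apply, ContinuousMap.one_apply, mul_one, ContinuousMap.coe_mk] at this
    linarith)
  have hinv : m.map φ = m := by
    have : IsProbabilityMeasure (m.map φ) :=
      Measure.isProbabilityMeasure_map φ.continuous.measurable.aemeasurable
    apply ext_of_forall_integral_eq_of_IsFiniteMeasure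
    intro f
    rw [integral_map φ.continuous.measurable.aemeasurable
      f.continuous.aestronglyMeasurable]
    have := hm2 f.toContinuousMap
    simp only [weightedCob_apply, ContinuousMap.one_apply, mul_one] at this
    rw [integral_sub (cont_integrable m (by fun_prop)) (cont_integrable m (by fun_prop))] at this
    simp at this
    linarith
  have : m = μ := huniq m hm (fun B hB => by
    rw [← Measure.map_apply φ.continuous.measurable hB, hinv])
  subst this
  simp at hm1
  linarith

lemma integral_lt_of_lt {X : Type*} [MetricSpace X] [CompactSpace X]
    [MeasurableSpace X] [BorelSpace X] (m : Measure X) [IsProbabilityMeasure m]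
    {f g : X → ℝ} (hf : Continuous f) (hg : Continuous g) (h : ∀ x, f x < g x) :
    ∫ x, f x ∂m < ∫ x, g x ∂m := by
  have : 0 < ∫ x, (g x - f x) ∂m := by
    rw [integral_pos_iff_support_of_nonneg (fun x => (sub_pos.2 (h x)).le)
      (cont_integrable m (hg.sub hf))]
    have : Function.support (fun x => g x - f x) = Set.univ := by
      ext x; simpa using (sub_pos.2 (h x)).ne'
    rw [this]; simp
  rw [integral_sub (cont_integrable m hg) (cont_integrable m hf)] at this
  linarith

lemma integral_zero_of_conformal {X : Type*} [MetricSpace X] [CompactSpace X]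
    [MeasurableSpace X] [BorelSpace X]
    (φ : X ≃ₜ X) (F : X → ℝ) (hF : Continuous F) (μ : Measure X)
    (huniq : ∀ ν : Measure X, IsProbabilityMeasure ν → IsInvariantMeasure φ ν → ν = μ)
    (β : ℝ) (hβ : β ≠ 0) (m : Measure X) (hm : IsConformalMeasure φ F β m) :
    ∫ x, F x ∂μ = 0 := by
  obtain ⟨hmp, hm⟩ := hm
  have hφ := φ.continuous
  have h1 : ¬ 0 < ∫ x, β * F x ∂μ := by
    intro h
    obtain ⟨f, hf⟩ := exists_cohomologous_pos φ μ huniq _ (by fun_prop) h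
    have := hm (fun x => Real.exp (- f x)) (by fun_prop)
    refine (integral_lt_of_lt m (by fun_prop) (by fun_prop) (fun x => ?_)).ne this
    rw [← Real.exp_add, Real.exp_lt_exp]
    linarith [hf x]
  have h2 : ¬ 0 < ∫ x, -(β * F x) ∂μ := by
    intro h
    obtain ⟨f, hf⟩ := exists_cohomologous_pos φ μ huniq _ (by fun_prop) h
    have := hm (fun x => Real.exp (f x)) (by fun_prop)
    refine (integral_lt_of_lt m (by fun_prop) (by fun_prop) (fun x => ?_)).ne this.symm
    rw [← Real.exp_add, Real.exp_lt_exp]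
    linarith [hf x]
  rw [integral_neg] at h2
  have : ∫ x, β * F x ∂μ = 0 := by linarith
  rw [integral_const_mul] at this
  exact (mul_eq_zero.1 this).resolve_left hβ

lemma conformal_of_integral_zero {X : Type*} [MetricSpace X] [CompactSpace X]
    [MeasurableSpace X] [BorelSpace X]
    (φ : X ≃ₜ X) (F : X → ℝ) (hF : Continuous F) (μ : Measure X)
    (hμprob : IsProbabilityMeasure μ) (hμinv : IsInvariantMeasure φ μ)
    (huniq : ∀ ν : Measure X, IsProbabilityMeasure ν → IsInvariantMeasure φ ν → ν = μ)
    (h0 : ∫ x, F x ∂μ = 0) (β : ℝ) : ∃ m : Measure X, IsConformalMeasure φ F β m := by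
  have hφ := φ.continuous
  have hne : Nonempty X := nonempty_of_isProbabilityMeasure μ
  by_cases hsep : ∀ f, ¬ ∀ x, 0 < (0 : C(X, ℝ)) x +
      weightedCob φ ⟨fun x => Real.exp (β * F x), by fun_prop⟩ f x
  · obtain ⟨m, hm, -, hm2⟩ := exists_prob_of_separation 0 _ hsep
    refine ⟨m, hm, fun f hf => ?_⟩
    have := hm2 ⟨f, hf⟩
    simp only [weightedCob_apply, ContinuousMap.coe_mk] at this
    rw [integral_sub (cont_integrable m (by fun_prop)) (cont_integrable m (by fun_prop))] at this
    linarith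
  exfalso
  push Not at hsep
  obtain ⟨f, hf⟩ := hsep
  simp only [weightedCob_apply, ContinuousMap.coe_mk, ContinuousMap.zero_apply, zero_add,
    sub_pos] at hf
  by_cases hp : ∀ x, 0 < f x
  · have hlogc : Continuous fun x => Real.log (f x) :=
      f.continuous.log (fun x => (hp x).ne')
    have hlogc2 : Continuous fun x => Real.log (f (φ x)) := hlogc.comp hφ
    have hlt := integral_lt_of_lt μ (f := fun x => Real.log (f (φ x)) + β * F x)
      (g := fun x => Real.log (f x)) (hlogc2.add (by fun_prop)) hlogc (fun x => by
        rw [← Real.log_exp (β * F x), ← Real.log_mul (hp _).ne' (Real.exp_pos _).ne']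
        exact Real.log_lt_log (mul_pos (hp _) (Real.exp_pos _)) (hf x))
    have hmap : μ.map φ = μ := by
      ext B hB
      rw [Measure.map_apply φ.continuous.measurable hB, hμinv B hB]
    have hinv : ∫ x, Real.log (f (φ x)) ∂μ = ∫ x, Real.log (f x) ∂μ := by
      conv_rhs => rw [← hmap]
      rw [integral_map φ.continuous.measurable.aemeasurable hlogc.aestronglyMeasurable]
    rw [integral_add (cont_integrable μ hlogc2) (cont_integrable μ (by fun_prop)),
      integral_const_mul, h0, hinv] at hlt
    simp at hlt
  · push Not at hp
    obtain ⟨y, hy⟩ := hp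
    -- a uniform gap
    have hgc : Continuous fun x => f x - f (φ x) * Real.exp (β * F x) := by fun_prop
    obtain ⟨z, -, hz⟩ := isCompact_univ.exists_isMinOn Set.univ_nonempty hgc.continuousOn
    have hgap : ∀ x, f z - f (φ z) * Real.exp (β * F z) ≤ f x - f (φ x) * Real.exp (β * F x) :=
      fun x => hz (Set.mem_univ x)
    have hε : 0 < f z - f (φ z) * Real.exp (β * F z) := sub_pos.2 (hf z)
    generalize f z - f (φ z) * Real.exp (β * F z) = ε at hgap hε
    have hM : 0 < ‖f‖ + 1 := by positivity
    have hδ : 0 < ε / (‖f‖ + 1) := by positivity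
    have hbound : ∀ x, ε / (‖f‖ + 1) * (- f x) ≤ ε := fun x => by
      have h1 := f.norm_coe_le_norm x
      rw [Real.norm_eq_abs] at h1
      have h2 : - f x ≤ ‖f‖ + 1 := by linarith [neg_abs_le (f x)]
      calc _ ≤ ε / (‖f‖ + 1) * (‖f‖ + 1) := by gcongr
        _ = ε := div_mul_cancel₀ _ hM.ne'
    generalize ε / (‖f‖ + 1) = δ at hδ hbound
    obtain ⟨u, hu⟩ := exists_cohomologous_pos φ μ huniq
      (fun x => Real.log (1 + δ) - β * F x) (by fun_prop) (by
        rw [integral_sub (integrable_const _) (cont_integrable μ (by fun_prop)),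
          integral_const_mul, h0]
        simpa using Real.log_pos (by linarith))
    have hwc : Continuous fun x => f x * Real.exp (- u x) := by fun_prop
    obtain ⟨a, -, ha⟩ := isCompact_univ.exists_isMinOn Set.univ_nonempty hwc.continuousOn
    have hmin : ∀ x, f a * Real.exp (- u a) ≤ f x * Real.exp (- u x) :=
      fun x => ha (Set.mem_univ x)
    have hfy : f (φ y) < 0 := by
      have := hf y
      by_contra! hc
      have := mul_nonneg hc (Real.exp_pos (β * F y)).le
      linarith
    have hfa : f a < 0 := by
      by_contra! hc
      have h1 := mul_nonneg hc (Real.exp_pos (- u a)).le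
      have h2 := mul_neg_of_neg_of_pos hfy (Real.exp_pos (- u (φ y)))
      linarith [hmin (φ y)]
    have hfa' : f (φ a) < 0 := by
      have := hf a
      by_contra! hc
      have := mul_nonneg hc (Real.exp_pos (β * F a)).le
      linarith
    have e1 : (1 + δ) * (- f a) ≤ (- f (φ a)) * Real.exp (β * F a) := by
      linarith [hgap a, hbound a]
    have e2 : Real.exp (β * F a) < (1 + δ) * (Real.exp (u a) * Real.exp (- u (φ a))) := by
      have hlog : Real.exp (Real.log (1 + δ)) = 1 + δ := Real.exp_log (by linarith)
      rw [← hlog, ← Real.exp_add, ← Real.exp_add, Real.exp_lt_exp]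
      linarith [hu a]
    have e3 : (1 + δ) * (- f a) <
        (1 + δ) * ((- f (φ a)) * (Real.exp (u a) * Real.exp (- u (φ a)))) := by
      have := mul_lt_mul_of_pos_left e2 (neg_pos.2 hfa')
      linarith
    have e4 := lt_of_mul_lt_mul_left e3 (by linarith)
    have e5 := mul_lt_mul_of_pos_right e4 (Real.exp_pos (- u a))
    have e6 : Real.exp (u a) * Real.exp (- u a) = 1 := by rw [← Real.exp_add]; simp
    have e7 : (- f (φ a)) * (Real.exp (u a) * Real.exp (- u (φ a))) * Real.exp (- u a)
        = - (f (φ a) * Real.exp (- u (φ a))) := by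
      linear_combination (- f (φ a) * Real.exp (- u (φ a))) * e6
    linarith [hmin (φ a)]

theorem stmt7 {X : Type*} [MetricSpace X] [CompactSpace X]
    [MeasurableSpace X] [BorelSpace X]
    (φ : X ≃ₜ X) (F : X → ℝ) (hF : Continuous F)
    (μ : Measure X) (hμprob : IsProbabilityMeasure μ) (hμinv : IsInvariantMeasure φ μ)
    (huniq : ∀ ν : Measure X, IsProbabilityMeasure ν → IsInvariantMeasure φ ν → ν = μ) :
    List.TFAE
      [ ∃ β : ℝ, β ≠ 0 ∧ ∃ m : Measure X, IsConformalMeasure φ F β m,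
        ∀ β : ℝ, ∃ m : Measure X, IsConformalMeasure φ F β m,
        ∫ x, F x ∂μ = 0 ] := by
  tfae_have 2 → 1 := fun h => ⟨1, one_ne_zero, h 1⟩
  tfae_have 1 → 3 := by
    rintro ⟨β, hβ, m, hm⟩
    exact integral_zero_of_conformal φ F hF μ huniq β hβ m hm
  tfae_have 3 → 2 := fun h β =>
    conformal_of_integral_zero φ F hF μ hμprob hμinv huniq h β
  tfae_finish
end

section
/- Let X be a compact metric space, φ: X → X a homeomorphism and F: X → ℝ continuous. The following are equivalent: (a) ∫_X F dν = 0 for every φ-invariant Borel probability measure ν on X; (b) there is a sequence (h_n)_{n≥1} of continuous real-valued functions on X such that h_n ∘ φ − h_n converges uniformly on X to F as n → ∞. -/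
open MeasureTheory Filter Topology

lemma exists_empirical {X : Type*} [MetricSpace X] [CompactSpace X]
    [MeasurableSpace X] [BorelSpace X] (φ : X ≃ₜ X) (n : ℕ) (x : X) :
    ∃ P : ProbabilityMeasure X, ∀ g : X → ℝ, Continuous g →
      ∫ y, g y ∂(P : Measure X) = birkhoffAverage ℝ φ g (n + 1) x := by
  have hn : ((n : ENNReal) + 1) ≠ 0 := by simp
  have hn' : ((n : ENNReal) + 1) ≠ ⊤ := by simp
  refine ⟨⟨((n : ENNReal) + 1)⁻¹ • ∑ k ∈ Finset.range (n + 1),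
    Measure.dirac (φ^[k] x), ⟨?_⟩⟩, ?_⟩
  · simp [ENNReal.inv_mul_cancel hn hn']
  · intro g hg
    simp only [ProbabilityMeasure.coe_mk]
    rw [integral_smul_measure, integral_finsetSum_measure]
    · simp [birkhoffAverage, birkhoffSum, ENNReal.toReal_add]
    · intro i _
      exact hg.integrable_of_hasCompactSupport (HasCompactSupport.of_compactSpace g)

lemma birkhoff_unif {X : Type*} [MetricSpace X] [CompactSpace X]
    [MeasurableSpace X] [BorelSpace X]
    (φ : X ≃ₜ X) (F : X → ℝ) (hF : Continuous F)
    (H : ∀ ν : Measure X, IsProbabilityMeasure ν → IsInvariantMeasure φ ν →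
        ∫ x, F x ∂ν = 0) (ε : ℝ) (hε : 0 < ε) :
    ∀ᶠ n : ℕ in atTop, ∀ x, |birkhoffAverage ℝ φ F (n + 1) x| < ε := by
  by_contra hcon
  rw [Filter.not_eventually] at hcon
  obtain ⟨n0, hn0⟩ := hcon.exists
  push Not at hn0
  obtain ⟨x0, -⟩ := hn0
  have hch : ∀ n : ℕ, ∃ x, (¬ ∀ x, |birkhoffAverage ℝ φ F (n + 1) x| < ε) →
      ε ≤ |birkhoffAverage ℝ φ F (n + 1) x| := by
    intro n
    by_cases h : ∀ x, |birkhoffAverage ℝ φ F (n + 1) x| < ε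
    · exact ⟨x0, fun h' => absurd h h'⟩
    · push Not at h
      obtain ⟨x, hx⟩ := h
      exact ⟨x, fun _ => hx⟩
  choose x hx using hch
  have hcon2 : ∃ᶠ n : ℕ in atTop,
      n ∈ {n : ℕ | ε ≤ |birkhoffAverage ℝ φ F (n + 1) (x n)|} :=
    hcon.mono fun n hn => hx n hn
  have hne := Filter.frequently_mem_iff_neBot.1 hcon2
  let U : Ultrafilter ℕ := Ultrafilter.of
    (atTop ⊓ 𝓟 {n : ℕ | ε ≤ |birkhoffAverage ℝ φ F (n + 1) (x n)|})
  have hU : (U : Filter ℕ) ≤ _ := Ultrafilter.of_le _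
  have hU1 : (U : Filter ℕ) ≤ atTop := hU.trans inf_le_left
  have hU2 : ∀ᶠ n in (U : Filter ℕ), ε ≤ |birkhoffAverage ℝ φ F (n + 1) (x n)| :=
    (hU.trans inf_le_right) (mem_principal_self _)
  choose P hP using fun n => exists_empirical φ n (x n)
  obtain ⟨ν, -, hν⟩ := isCompact_univ.ultrafilter_le_nhds (U.map P) (by simp)
  have hν' : Tendsto P U (𝓝 ν) := hν
  rw [ProbabilityMeasure.tendsto_iff_forall_integral_tendsto] at hν'
  have key : ∀ g : X → ℝ, Continuous g →
      Tendsto (fun n => birkhoffAverage ℝ φ g (n + 1) (x n)) U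
        (𝓝 (∫ y, g y ∂(ν : Measure X))) := by
    intro g hg
    have := hν' (BoundedContinuousFunction.mkOfCompact ⟨g, hg⟩)
    simpa [hP _ g hg] using this
  have inv : IsInvariantMeasure φ (ν : Measure X) := by
    have hmap : (ν : Measure X).map φ = ν := by
      have : IsProbabilityMeasure ((ν : Measure X).map φ) :=
        Measure.isProbabilityMeasure_map φ.continuous.aemeasurable
      apply ext_of_forall_integral_eq_of_IsFiniteMeasure
      intro g
      rw [integral_map φ.continuous.aemeasurable
        g.continuous.aestronglyMeasurable]
      have h1 := (key (fun y => g (φ y)) (g.continuous.comp φ.continuous)).sub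
        (key g g.continuous)
      have h2 : Tendsto (fun n => birkhoffAverage ℝ φ (fun y => g (φ y)) (n + 1) (x n)
          - birkhoffAverage ℝ φ g (n + 1) (x n)) U (𝓝 0) := by
        have e : ∀ n, birkhoffAverage ℝ φ (fun y => g (φ y)) (n + 1) (x n)
          - birkhoffAverage ℝ φ g (n + 1) (x n) =
            ((n : ℝ) + 1)⁻¹ * (g (φ^[n + 1] (x n)) - g (x n)) := by
          intro n
          have := birkhoffAverage_apply_sub_birkhoffAverage (R := ℝ) (f := φ) (g := g) (n + 1) (x n)
          rw [smul_eq_mul, Nat.cast_add, Nat.cast_one] at this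
          rw [← this]
          congr 1
          simp only [birkhoffAverage, birkhoffSum, ← Function.iterate_succ_apply,
            ← Function.iterate_succ_apply']
        simp_rw [e]
        refine Tendsto.mono_left ?_ hU1
        have l0 : Tendsto (fun n : ℕ => ((n : ℝ) + 1)⁻¹ * (2 * ‖g‖)) atTop (𝓝 0) := by
          have := (tendsto_one_div_add_atTop_nhds_zero_nat (𝕜 := ℝ)).mul_const (2 * ‖g‖)
          simpa using this
        refine squeeze_zero_norm (fun n => ?_) l0
        rw [norm_mul, Real.norm_of_nonneg (by positivity)]
        gcongr
        rw [← dist_eq_norm]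
        exact g.dist_le_two_norm _ _
      have := tendsto_nhds_unique h1 h2
      linarith
    intro B hB
    rw [← Measure.map_apply φ.continuous.measurable hB, hmap]
  have h0 := H ν inferInstance inv
  have hk := (key F hF).abs
  rw [h0, abs_zero] at hk
  have := ge_of_tendsto hk hU2
  linarith

theorem stmt9 {X : Type*} [MetricSpace X] [CompactSpace X]
    [MeasurableSpace X] [BorelSpace X]
    (φ : X ≃ₜ X) (F : X → ℝ) (hF : Continuous F) :
    (∀ ν : Measure X, IsProbabilityMeasure ν → IsInvariantMeasure φ ν →
        ∫ x, F x ∂ν = 0) ↔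
      ∃ h : ℕ → X → ℝ, (∀ n, Continuous (h n)) ∧
        TendstoUniformly (fun n x => h n (φ x) - h n x) F atTop := by
  constructor
  · intro H
    refine ⟨fun n x => -(((n : ℝ) + 1)⁻¹ * ∑ k ∈ Finset.range (n + 1),
      birkhoffSum φ F k x), ?_, ?_⟩
    · intro n
      have : ∀ k, Continuous fun x => birkhoffSum φ F k x := by
        intro k
        simp only [birkhoffSum]
        exact continuous_finsetSum _ fun i _ => hF.comp (φ.continuous.iterate i)
      fun_prop
    · rw [Metric.tendstoUniformly_iff]
      intro ε hε
      filter_upwards [birkhoff_unif φ F hF H ε hε] with n hn x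
      have hn := hn x
      convert hn using 1
      rw [Real.dist_eq]
      congr 1
      have e : ∑ k ∈ Finset.range (n + 1), birkhoffSum φ F k (φ x)
          - ∑ k ∈ Finset.range (n + 1), birkhoffSum φ F k x
          = birkhoffSum φ F (n + 1) x - ((n : ℝ) + 1) * F x := by
        rw [← Finset.sum_sub_distrib]
        simp_rw [birkhoffSum_apply_sub_birkhoffSum]
        rw [Finset.sum_sub_distrib]
        simp [birkhoffSum]
      have hne : (n : ℝ) + 1 ≠ 0 := by positivity
      simp only [birkhoffAverage, smul_eq_mul, Nat.cast_add, Nat.cast_one]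
      rw [eq_add_of_sub_eq e]
      field_simp
      ring
  · rintro ⟨h, hc, hu⟩ ν hν inv
    have int : ∀ g : X → ℝ, Continuous g → Integrable g ν := fun g hg =>
      hg.integrable_of_hasCompactSupport (HasCompactSupport.of_compactSpace g)
    have hmap : ν.map φ = ν := by
      ext B hB
      rw [Measure.map_apply φ.continuous.measurable hB, inv B hB]
    have hz : ∀ n, ∫ x, (h n (φ x) - h n x) ∂ν = 0 := by
      intro n
      rw [integral_sub (int (fun x => h n (φ x)) ((hc n).comp φ.continuous)) (int _ (hc n)), sub_eq_zero]
      conv_rhs => rw [← hmap]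
      rw [integral_map φ.continuous.aemeasurable (hc n).aestronglyMeasurable]
    by_contra hne
    rw [Metric.tendstoUniformly_iff] at hu
    obtain ⟨n, hn⟩ := (hu (|∫ x, F x ∂ν| / 2) (by positivity)).exists
    have hb : ‖∫ x, (F x - (h n (φ x) - h n x)) ∂ν‖ ≤
        (|∫ x, F x ∂ν| / 2) * ν.real Set.univ :=
      norm_integral_le_of_norm_le_const (Eventually.of_forall fun x => by
        rw [← dist_eq_norm]; exact (hn x).le)
    rw [integral_sub (int _ hF) (int (fun x => h n (φ x) - h n x) (((hc n).comp φ.continuous).sub (hc n))), hz] at hb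
    simp only [sub_zero, probReal_univ, mul_one, Real.norm_eq_abs] at hb
    have : 0 < |∫ x, F x ∂ν| := abs_pos.2 hne
    linarith
end

section
/- Let α be an irrational real number, let 𝕋 = ℝ/ℤ be the circle, let φ: 𝕋 → 𝕋 be the rotation φ(x) = x + α, and let λ be Haar (Lebesgue) probability measure on 𝕋. Then there exist a continuous function F: 𝕋 → ℝ, a non-negative Borel function v: 𝕋 → ℝ, and a strictly increasing sequence (n_k)_{k≥1} of natural numbers such that: (i) F(x) = v(x) − v(φ(x)) for λ-almost all x ∈ 𝕋; (ii) ∫_𝕋 F dλ = 0; (iii) v is not λ-integrable, i.e. ∫_𝕋 v dλ = ∞; and (iv) |∑_{i=0}^{n_k−1} F(φ^i(x))| ≤ 2 for all x ∈ 𝕋 and all k. -/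
open MeasureTheory Filter Topology

/-- bump function of height `2^j`, Lipschitz constant `4^j`. -/
noncomputable def bumpH (j : ℕ) (t : UnitAddCircle) : ℝ := max 0 (2 ^ j - 4 ^ j * ‖t‖)

lemma bumpH_nonneg (j : ℕ) (t : UnitAddCircle) : 0 ≤ bumpH j t := le_max_left _ _

lemma bumpH_cont (j : ℕ) : Continuous (bumpH j) := by
  unfold bumpH; fun_prop

lemma bumpH_lip (j : ℕ) (s t : UnitAddCircle) :
    |bumpH j s - bumpH j (s + t)| ≤ 4 ^ j * ‖t‖ := by
  unfold bumpH
  refine (abs_max_sub_max_le_max _ _ _ _).trans ?_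
  have h4 : (0 : ℝ) < 4 ^ j := by positivity
  refine max_le (by simp) ?_
  have h : |‖s + t‖ - ‖s‖| ≤ ‖t‖ := by
    simpa using abs_norm_sub_norm_le (s + t) s
  have e : (2 : ℝ) ^ j - 4 ^ j * ‖s‖ - (2 ^ j - 4 ^ j * ‖s + t‖) = 4 ^ j * (‖s + t‖ - ‖s‖) := by
    ring
  rw [e, abs_mul, abs_of_pos h4]
  gcongr

lemma bumpH_lintegral (j : ℕ) :
    ENNReal.ofReal (1 / 2) ≤ ∫⁻ t, ENNReal.ofReal (bumpH j t) := by
  have h2 : (0 : ℝ) < 2 ^ j := by positivity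
  have h21 : (1 : ℝ) ≤ 2 ^ j := one_le_pow₀ (by norm_num)
  have h4 : (4 : ℝ) ^ j = 2 ^ j * 2 ^ j := by rw [← mul_pow]; norm_num
  have hv := AddCircle.volume_closedBall (T := (1 : ℝ)) (x := 0) (1 / (2 * 2 ^ j))
  have key : ∀ t ∈ Metric.closedBall (0 : UnitAddCircle) (1 / (2 * 2 ^ j)),
      ENNReal.ofReal (2 ^ j / 2) ≤ ENNReal.ofReal (bumpH j t) := by
    intro t ht
    apply ENNReal.ofReal_le_ofReal
    rw [mem_closedBall_zero_iff] at ht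
    refine le_max_of_le_right ?_
    have : (4 : ℝ) ^ j * ‖t‖ ≤ 4 ^ j * (1 / (2 * 2 ^ j)) := by gcongr
    have e : (4 : ℝ) ^ j * (1 / (2 * 2 ^ j)) = 2 ^ j / 2 := by rw [h4]; field_simp
    linarith
  calc ENNReal.ofReal (1 / 2)
      = ENNReal.ofReal (2 ^ j / 2) *
        volume (Metric.closedBall (0 : UnitAddCircle) (1 / (2 * 2 ^ j))) := by
        rw [hv, ← ENNReal.ofReal_mul (by positivity), min_eq_right]
        · congr 1; field_simp
        · rw [show (2 : ℝ) * (1 / (2 * 2 ^ j)) = 1 / 2 ^ j by field_simp]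
          rw [div_le_one h2]; exact h21
    _ ≤ ∫⁻ t in Metric.closedBall (0 : UnitAddCircle) (1 / (2 * 2 ^ j)),
          ENNReal.ofReal (bumpH j t) := by
        rw [← setLIntegral_const]
        exact setLIntegral_mono' measurableSet_closedBall key
    _ ≤ _ := setLIntegral_le_lintegral _ _

lemma bumpH_supp (j : ℕ) :
    volume {t : UnitAddCircle | bumpH j t ≠ 0} ≤ ENNReal.ofReal (2 * (1 / 2) ^ j) := by
  have h2 : (0 : ℝ) < 2 ^ j := by positivity
  have h4 : (4 : ℝ) ^ j = 2 ^ j * 2 ^ j := by rw [← mul_pow]; norm_num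
  have hsub : {t : UnitAddCircle | bumpH j t ≠ 0} ⊆ Metric.closedBall 0 ((1 / 2) ^ j) := by
    intro t ht
    rw [mem_closedBall_zero_iff]
    by_contra! hc
    apply ht
    refine max_eq_left ?_
    have : (4 : ℝ) ^ j * (1 / 2) ^ j ≤ 4 ^ j * ‖t‖ := by gcongr
    have e : (4 : ℝ) ^ j * (1 / 2) ^ j = 2 ^ j := by rw [← mul_pow]; norm_num
    linarith
  refine (measure_mono hsub).trans ?_
  rw [AddCircle.volume_closedBall]
  exact ENNReal.ofReal_le_ofReal (min_le_right _ _)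

lemma exists_step (x : UnitAddCircle) (a : ℕ) (ε : ℝ) (hε : 0 < ε) :
    ∃ b : ℕ, a < b ∧ (a : ℝ) * ‖b • x‖ ≤ ε := by
  obtain ⟨n, hn⟩ := exists_nat_gt (a / ε)
  have hn0 : 0 < n := by
    have : (0 : ℝ) ≤ a / ε := by positivity
    exact_mod_cast this.trans_lt hn
  have : Fact ((0 : ℝ) < 1) := ⟨one_pos⟩
  obtain ⟨j, hj, hjn⟩ := AddCircle.exists_norm_nsmul_le (T := (1 : ℝ)) ((a + 1) • x) hn0
  refine ⟨j * (a + 1), ?_, ?_⟩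
  · have := (Set.mem_Icc.1 hj).1
    nlinarith
  · rw [mul_nsmul']
    calc (a : ℝ) * ‖j • (a + 1) • x‖ ≤ a * (1 / (n + 1)) := by
          push_cast at hjn; gcongr
      _ ≤ ε := by
        rw [mul_one_div, div_le_iff₀ (by positivity)]
        rw [div_lt_iff₀ hε] at hn
        nlinarith

lemma exists_seq (x : UnitAddCircle) :
    ∃ a : ℕ → ℕ, StrictMono a ∧ (∀ m, 1 ≤ a m) ∧
      ∀ i m, i < m → (a i : ℝ) * ‖a m • x‖ ≤ (1 / 8) ^ m := by
  choose f hf1 hf2 using fun (a m : ℕ) => exists_step x a ((1 / 8) ^ m) (by positivity)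
  obtain ⟨a, ha0, hs⟩ : ∃ a : ℕ → ℕ, a 0 = 1 ∧ ∀ m, a (m + 1) = f (a m) (m + 1) :=
    ⟨fun m => Nat.rec 1 (fun m r => f r (m + 1)) m, rfl, fun m => rfl⟩
  have hmono : StrictMono a := strictMono_nat_of_lt_succ fun m => by rw [hs]; exact hf1 _ _
  refine ⟨a, hmono, fun m => ?_, ?_⟩
  · rw [← ha0]; exact hmono.monotone (Nat.zero_le m)
  · intro i m him
    obtain ⟨m, rfl⟩ : ∃ k, m = k + 1 := ⟨m - 1, by omega⟩
    have h1 : (a i : ℝ) ≤ (a m : ℝ) := Nat.cast_le.2 (hmono.monotone (Nat.lt_succ_iff.1 him))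
    calc (a i : ℝ) * ‖a (m + 1) • x‖ ≤ (a m : ℝ) * ‖a (m + 1) • x‖ := by gcongr
      _ ≤ _ := by rw [hs]; exact hf2 _ _

lemma cont_int {g : UnitAddCircle → ℝ} (hg : Continuous g) : Integrable g :=
  hg.integrable_of_hasCompactSupport (HasCompactSupport.of_compactSpace _)

lemma nsmul_mp {n : ℕ} (hn : 1 ≤ n) :
    MeasurePreserving (fun x : UnitAddCircle => n • x) volume volume := by
  have : Fact ((0 : ℝ) < 1) := ⟨one_pos⟩
  rcases hn.eq_or_lt with rfl | h
  · simp only [one_nsmul]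
    exact MeasurePreserving.id _
  · exact (AddCircle.ergodic_nsmul (T := (1 : ℝ)) h).toMeasurePreserving

set_option maxHeartbeats 400000 in
theorem stmt18 (α : ℝ) (hα : Irrational α) :
    ∃ (F : UnitAddCircle → ℝ) (v : UnitAddCircle → ℝ) (n : ℕ → ℕ),
      Continuous F ∧ Measurable v ∧ (∀ x, 0 ≤ v x) ∧ StrictMono n ∧
      (∀ᵐ x : UnitAddCircle ∂volume, F x = v x - v (x + (α : UnitAddCircle))) ∧
      (∫ x : UnitAddCircle, F x ∂volume = 0) ∧
      (∫⁻ x : UnitAddCircle, ENNReal.ofReal (v x) ∂volume = ⊤) ∧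
      (∀ x : UnitAddCircle, ∀ k : ℕ,
        |∑ i ∈ Finset.range (n k), F (x + (i : ℕ) • (α : UnitAddCircle))| ≤ 2) := by
  set β : UnitAddCircle := (α : UnitAddCircle) with hβ
  have : Fact ((0 : ℝ) < 1) := ⟨one_pos⟩
  obtain ⟨a, hmono, ha1, ha⟩ := exists_seq β
  let V : ℕ → UnitAddCircle → ℝ := fun j x => bumpH j (a (2 * j) • x)
  have hVc : ∀ j, Continuous (V j) := fun j => (bumpH_cont j).comp (continuous_nsmul _)
  have hV0 : ∀ j x, 0 ≤ V j x := fun j x => bumpH_nonneg _ _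
  have hVl : ∀ (j : ℕ) (x : UnitAddCircle) (n : ℕ), |V j x - V j (x + n • β)| ≤ 4 ^ j * ‖a (2 * j) • n • β‖ := by
    intro j x n
    simp only [V, nsmul_add]
    exact bumpH_lip _ _ _
  have hpow : ∀ j m, 2 * j ≤ m → (4 : ℝ) ^ j * (1 / 8) ^ m ≤ (1 / 2) ^ j := by
    intro j m hm
    have h1 : ((1 : ℝ) / 8) ^ m ≤ (1 / 8) ^ j :=
      pow_le_pow_of_le_one (by norm_num) (by norm_num) (by omega)
    calc (4 : ℝ) ^ j * (1 / 8) ^ m ≤ 4 ^ j * (1 / 8) ^ j := by gcongr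
      _ = (1 / 2) ^ j := by rw [← mul_pow]; norm_num
  have hV1 : ∀ j x, ‖V j x - V j (x + β)‖ ≤ (1 / 2) ^ j := by
    intro j x
    have h := hVl j x 1
    rw [one_nsmul] at h
    refine h.trans (le_trans ?_ (hpow j (2 * j) le_rfl))
    gcongr
    rcases Nat.eq_zero_or_pos j with rfl | hj
    · have := AddCircle.norm_le_half_period (p := (1 : ℝ)) one_ne_zero (x := a (2 * 0) • β)
      simp at this ⊢
      linarith
    · have h1 := ha 0 (2 * j) (by omega)
      have h2 : (1 : ℝ) ≤ a 0 := by exact_mod_cast ha1 0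
      nlinarith [norm_nonneg (a (2 * j) • β)]
  have hVn : ∀ j k x, ‖V j x - V j (x + a (2 * k + 1) • β)‖ ≤ (1 / 2) ^ j := by
    intro j k x
    refine (hVl j x _).trans ?_
    rcases Nat.lt_or_ge (2 * k + 1) (2 * j) with h | h
    · refine le_trans ?_ (hpow j (2 * j) le_rfl)
      gcongr
      rw [← mul_nsmul, mul_nsmul']
      exact (norm_nsmul_le).trans (ha _ _ h)
    · refine le_trans ?_ (hpow j (2 * k + 1) h)
      gcongr
      exact (norm_nsmul_le).trans (ha _ _ (by omega))
  have hgeo : Summable fun j : ℕ => ((1 : ℝ) / 2) ^ j := summable_geometric_two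
  have hFs : ∀ x, Summable fun j => V j x - V j (x + β) := fun x =>
    Summable.of_norm_bounded hgeo fun j => hV1 j x
  let w : UnitAddCircle → ENNReal := fun x => ∑' j, ENNReal.ofReal (V j x)
  have hwm : Measurable w := Measurable.tsum fun j => (hVc j).measurable.ennreal_ofReal
  have hmp : MeasurePreserving (fun x : UnitAddCircle => x + β) volume volume :=
    measurePreserving_add_right volume β
  have hq : ∀ j, MeasurePreserving (fun x : UnitAddCircle => a (2 * j) • x) volume volume := by
    intro j
    exact nsmul_mp (ha1 _)
  have hae : ∀ᵐ x : UnitAddCircle, Summable fun j => V j x := by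
    have hm : ∑' j, volume {x : UnitAddCircle | V j x ≠ 0} ≠ ⊤ := by
      have hle : ∀ j, volume {x : UnitAddCircle | V j x ≠ 0} ≤ ENNReal.ofReal (2 * (1 / 2) ^ j) := by
        intro j
        have hms : MeasurableSet {t : UnitAddCircle | bumpH j t ≠ 0} :=
          ((bumpH_cont j).measurable (measurableSet_singleton 0)).compl
        have := (hq j).measure_preimage hms.nullMeasurableSet
        exact this.le.trans (bumpH_supp j)
      refine ne_top_of_le_ne_top ?_ (ENNReal.tsum_le_tsum hle)
      exact (hgeo.mul_left 2).tsum_ofReal_ne_top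
    filter_upwards [ae_finite_setOfPred_mem hm] with x hx
    exact summable_of_hasFiniteSupport hx
  have hwV : ∀ x, (Summable fun j => V j x) → w x = ENNReal.ofReal (∑' j, V j x) := fun x hx =>
    (ENNReal.ofReal_tsum_of_nonneg (fun j => hV0 j x) hx).symm
  have hvV : ∀ x, (Summable fun j => V j x) → (w x).toReal = ∑' j, V j x := fun x hx => by
    rw [hwV x hx, ENNReal.toReal_ofReal (tsum_nonneg fun j => hV0 j x)]
  have hVi : ∀ j, Integrable (V j) := fun j =>
    cont_int (hVc j)
  have hVi' : ∀ j, Integrable (fun x => V j (x + β)) := fun j =>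
    (hVi j).comp_add_right β
  refine ⟨fun x => ∑' j, (V j x - V j (x + β)), fun x => (w x).toReal, fun k => a (2 * k + 1),
    ?_, hwm.ennreal_toReal, fun x => ENNReal.toReal_nonneg, ?_, ?_, ?_, ?_, ?_⟩
  · exact continuous_tsum (fun j => (hVc j).sub ((hVc j).comp (continuous_add_const β))) hgeo hV1
  · intro k l h
    exact hmono (by omega)
  · filter_upwards [hae, hmp.quasiMeasurePreserving.ae hae] with x h1 h2
    rw [hvV x h1, hvV _ h2, h1.tsum_sub h2]
  · rw [← integral_tsum_of_summable_integral_norm]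
    · have : ∀ j, ∫ x, (V j x - V j (x + β)) = 0 := by
        intro j
        rw [integral_sub (hVi j) (hVi' j), integral_add_right_eq_self (V j) β, sub_self]
      simp [this]
    · exact fun j => (hVi j).sub (hVi' j)
    · refine Summable.of_nonneg_of_le (fun j => integral_nonneg fun x => norm_nonneg _)
        (fun j => ?_) hgeo
      have := integral_mono ((hVi j).sub (hVi' j)).norm
        (integrable_const (μ := (volume : Measure UnitAddCircle)) (((1 : ℝ) / 2) ^ j))
        (fun x => hV1 j x)
      simpa [measureReal_def, UnitAddCircle.measure_univ] using this
  · have e : ∫⁻ x : UnitAddCircle, ENNReal.ofReal (w x).toReal = ∫⁻ x, w x := by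
      refine lintegral_congr_ae ?_
      filter_upwards [hae] with x hx
      rw [ENNReal.ofReal_toReal]
      rw [hwV x hx]; exact ENNReal.ofReal_ne_top
    rw [e, lintegral_tsum fun j => (hVc j).measurable.ennreal_ofReal.aemeasurable]
    refine top_le_iff.1 ?_
    rw [← ENNReal.tsum_const_eq_top_of_ne_zero (α := ℕ) (c := ENNReal.ofReal (1 / 2)) (by simp)]
    refine ENNReal.tsum_le_tsum fun j => ?_
    have := (hq j).lintegral_comp (bumpH_cont j).measurable.ennreal_ofReal
    exact (bumpH_lintegral j).trans this.ge
  · intro x k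
    have e : ∑ i ∈ Finset.range (a (2 * k + 1)),
        ∑' j, (V j (x + i • β) - V j (x + i • β + β))
        = ∑' j, (V j x - V j (x + a (2 * k + 1) • β)) := by
      rw [← Summable.tsum_finsetSum fun i _ => hFs _]
      congr 1; ext j
      have := Finset.sum_range_sub' (fun i => V j (x + i • β)) (a (2 * k + 1))
      simp only [zero_nsmul, add_zero] at this
      rw [← this]
      refine Finset.sum_congr rfl fun i _ => ?_
      rw [succ_nsmul, add_assoc]
    show |∑ i ∈ Finset.range (a (2 * k + 1)),
        ∑' j, (V j (x + i • β) - V j (x + i • β + β))| ≤ 2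
    rw [e]
    exact tsum_of_norm_bounded hasSum_geometric_two fun j => hVn j k x
end

section
/- Let α be an irrational real number, let 𝕋 = ℝ/ℤ be the circle and let φ: 𝕋 → 𝕋 be the rotation φ(x) = x + α. Then there exists a continuous function F: 𝕋 → ℝ such that: (a) for every β ∈ ℝ there exists an e^{βF}-conformal measure for φ; (b) for every β ∈ ℝ, no e^{βF}-conformal measure is atomic; (c) for every β ≥ 0 there is exactly one φ-ergodic e^{βF}-conformal measure that is equivalent (mutually absolutely continuous) to a φ-invariant Borel probability measure; and (d) for every β < 0, no e^{βF}-conformal measure is equivalent to a φ-invariant Borel probability measure. -/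
open MeasureTheory Filter Topology

lemma bumpEx (a : UnitAddCircle) (ε δ c K : ℝ) (hε : 0 < ε) (hδ : 0 < δ) (hδ1 : δ ≤ 1)
    (hc : 0 < c) :
    ∃ v : C(UnitAddCircle, ℝ), (∀ x, 0 ≤ v x) ∧ (∀ x, |v (a + x) - v x| ≤ ε) ∧
      volume {x | v x ≠ 0} ≤ ENNReal.ofReal δ ∧
      ENNReal.ofReal K ≤ ∫⁻ x, ENNReal.ofReal (Real.exp (c * v x)) := by
  -- choose N
  obtain ⟨N, hN⟩ := exists_nat_ge (max 1 (24 * |K| / (c ^ 2 * (ε / 2) ^ 2 * δ)))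
  have hN1 : (1:ℝ) ≤ N := le_trans (le_max_left _ _) hN
  have hN2 : 24 * |K| / (c ^ 2 * (ε / 2) ^ 2 * δ) ≤ N := le_trans (le_max_right _ _) hN
  set r : ℝ := δ / (2 * (2 * N + 1)) with hr
  have hr0 : 0 < r := by positivity
  have hr1 : r ≤ 1 := by
    rw [hr, div_le_one (by positivity)]; linarith
  set C : ℝ := ε * N / r with hC
  have hC0 : 0 < C := by positivity
  let t : ℤ → UnitAddCircle → ℝ := fun i x => max 0 (ε * (N - |(i:ℝ)|) - C * ‖x - i • a‖)
  have ht0 : ∀ i x, 0 ≤ t i x := fun i x => le_max_left _ _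
  have htc : ∀ i, Continuous (t i) := fun i => by fun_prop
  let S : Finset ℤ := Finset.Icc (-(N:ℤ)) N
  have hS : S.Nonempty := ⟨0, by simp [S]⟩
  have hvc : Continuous (fun x => S.sup' hS (fun i => t i x)) := by
    apply Continuous.finset_sup'_apply
    intro i _; exact htc i
  have hv0 : ∀ x, 0 ≤ S.sup' hS (fun i => t i x) := fun x =>
    (ht0 0 x).trans (Finset.le_sup' (fun i => t i x) (by simp [S] : (0:ℤ) ∈ S))
  have hle : ∀ i x, t i x ≤ S.sup' hS (fun i => t i x) := by
    intro i x
    by_cases hi : i ∈ S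
    · exact Finset.le_sup' (fun i => t i x) hi
    · have : t i x = 0 := by
        apply max_eq_left
        have h1 : (N:ℝ) ≤ |(i:ℝ)| := by
          have : (N:ℤ) ≤ |i| := by
            simp only [S, Finset.mem_Icc, not_and_or, not_le] at hi
            rcases hi with hi | hi
            · rw [le_abs]; right; omega
            · rw [le_abs]; left; omega
          exact_mod_cast this
        have := norm_nonneg (x - i • a)
        nlinarith [mul_nonneg hC0.le this]
      rw [this]; exact hv0 x
  have hshift : ∀ i j : ℤ, |i - j| ≤ 1 → ∀ x y, x - i • a = y - j • a → t i x ≤ t j y + ε := by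
    intro i j hij x y hxy
    have h1 : |(j:ℝ)| ≤ |(i:ℝ)| + 1 := by
      have : |j| ≤ |i| + 1 := by
        have := abs_sub_abs_le_abs_sub j i
        rw [abs_sub_comm] at this; omega
      exact_mod_cast this
    simp only [t]
    apply max_le
    · have := ht0 j y; simp only [t] at this; linarith
    · have := le_max_right 0 (ε * (N - |(j:ℝ)|) - C * ‖y - j • a‖)
      rw [hxy]
      nlinarith
  refine ⟨⟨_, hvc⟩, hv0, ?_, ?_, ?_⟩
  · intro x
    simp only [ContinuousMap.coe_mk]
    rw [abs_sub_le_iff]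
    constructor
    · rw [sub_le_iff_le_add, Finset.sup'_le_iff]
      intro i _
      have := hshift i (i-1) (by simp) (a + x) x (by rw [sub_smul, one_smul]; abel)
      linarith [hle (i-1) x]
    · rw [sub_le_iff_le_add, Finset.sup'_le_iff]
      intro i _
      have := hshift i (i+1) (by simp) x (a + x) (by rw [add_smul, one_smul]; abel)
      linarith [hle (i+1) (a+x)]
  · have hsub : {x | (⟨_, hvc⟩ : C(UnitAddCircle, ℝ)) x ≠ 0} ⊆
        ⋃ i ∈ S, Metric.closedBall (i • a) r := by
      intro x hx
      simp only [ContinuousMap.coe_mk, Set.mem_ofPred_eq] at hx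
      by_contra hcon
      apply hx
      apply le_antisymm _ (hv0 x)
      rw [Finset.sup'_le_iff]
      intro i hi
      simp only [Set.mem_iUnion, not_exists, Metric.mem_closedBall, dist_eq_norm, not_le] at hcon
      have h2 := hcon i hi
      apply max_le le_rfl
      have h3 : C * r = ε * N := by rw [hC]; field_simp
      have h4 := abs_nonneg (i:ℝ)
      nlinarith [mul_lt_mul_of_pos_left h2 hC0]
    refine (measure_mono hsub).trans ((measure_biUnion_finset_le _ _).trans ?_)
    have : ∀ i ∈ S, volume (Metric.closedBall (i • a) r) ≤ ENNReal.ofReal (2 * r) := by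
      intro i _
      rw [AddCircle.volume_closedBall]
      exact ENNReal.ofReal_le_ofReal (min_le_right _ _)
    refine (Finset.sum_le_sum this).trans ?_
    rw [Finset.sum_const, nsmul_eq_mul, ← ENNReal.ofReal_natCast,
      ← ENNReal.ofReal_mul (by positivity)]
    apply ENNReal.ofReal_le_ofReal
    have : ((S.card : ℕ) : ℝ) = 2 * N + 1 := by
      have h5 : (S.card : ℤ) = 2 * N + 1 := by
        simp only [S, Int.card_Icc]; omega
      exact_mod_cast h5
    rw [this, hr]
    apply le_of_eq
    field_simp
  · have h1 : ∀ x ∈ Metric.closedBall (0:UnitAddCircle) (r/2), 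
        ENNReal.ofReal (Real.exp (c * (ε * N / 2))) ≤
          ENNReal.ofReal (Real.exp (c * (⟨_, hvc⟩ : C(UnitAddCircle, ℝ)) x)) := by
      intro x hx
      apply ENNReal.ofReal_le_ofReal
      apply Real.exp_le_exp.2
      apply mul_le_mul_of_nonneg_left _ hc.le
      refine le_trans ?_ (hle 0 x)
      refine le_trans ?_ (le_max_right _ _)
      simp only [Metric.mem_closedBall, dist_zero_right] at hx
      simp only [Int.cast_zero, abs_zero, sub_zero, zero_smul]
      have h3 : C * r = ε * N := by rw [hC]; field_simp
      nlinarith [mul_le_mul_of_nonneg_left hx hC0.le]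
    calc ENNReal.ofReal K ≤ ENNReal.ofReal (Real.exp (c * (ε * N / 2))) * 
          volume (Metric.closedBall (0:UnitAddCircle) (r/2)) := by
          rw [AddCircle.volume_closedBall, ← ENNReal.ofReal_mul (by positivity)]
          apply ENNReal.ofReal_le_ofReal
          rw [min_eq_right (by linarith), show 2 * (r / 2) = r by ring]
          have h2 := Real.quadratic_le_exp_of_nonneg (x := c * (ε * N / 2)) (by positivity)
          rw [div_le_iff₀ (by positivity)] at hN2
          have h6 : (c * (ε * N / 2)) ^ 2 / 2 * r ≤ Real.exp (c * (ε * N / 2)) * r := by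
            apply mul_le_mul_of_nonneg_right _ hr0.le
            have : 0 ≤ c * (ε * N / 2) := by positivity
            linarith
          refine le_trans ?_ h6
          rw [hr, ← mul_div_assoc, le_div_iff₀ (by positivity)]
          have h7 := le_abs_self K
          have h8 := abs_nonneg K
          have h9 : K * (2 * (2 * N + 1)) ≤ |K| * (6 * N) :=
            mul_le_mul h7 (by linarith) (by positivity) h8
          have h10 := mul_le_mul_of_nonneg_right hN2 (by positivity : (0:ℝ) ≤ N / 2)
          nlinarith [mul_nonneg h8 (by positivity : (0:ℝ) ≤ N)]
      _ = ∫⁻ x in Metric.closedBall (0:UnitAddCircle) (r/2),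
          ENNReal.ofReal (Real.exp (c * (ε * N / 2))) := by rw [setLIntegral_const]
      _ ≤ ∫⁻ x in Metric.closedBall (0:UnitAddCircle) (r/2),
          ENNReal.ofReal (Real.exp (c * (⟨_, hvc⟩ : C(UnitAddCircle, ℝ)) x)) := 
          setLIntegral_mono' measurableSet_closedBall h1
      _ ≤ _ := setLIntegral_le_lintegral _ _

lemma retEx (a : UnitAddCircle) (V : C(UnitAddCircle, ℝ)) (k : ℕ) :
    ∃ n : ℕ, k ≤ n ∧ 1 ≤ n ∧ ∀ x, |V (n • a + x) - V x| ≤ 1 := by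
  have hu : UniformContinuous V := CompactSpace.uniformContinuous_of_continuous V.continuous
  obtain ⟨δ, hδ, h⟩ := Metric.uniformContinuous_iff.1 hu 1 one_pos
  obtain ⟨n, hn⟩ := exists_nat_gt (1 / δ)
  have hn0 : 0 < n := by
    have : (0:ℝ) < n := lt_trans (by positivity) hn
    exact_mod_cast this
  obtain ⟨j, hj, hj2⟩ := AddCircle.exists_norm_nsmul_le (T := 1) ((k+1) • a) hn0
  rw [Set.mem_Icc] at hj
  refine ⟨j * (k+1), by nlinarith [hj.1], by nlinarith [hj.1], fun x => ?_⟩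
  have := h (a := (j * (k+1)) • a + x) (b := x) ?_
  · rw [Real.dist_eq] at this; exact this.le
  · rw [dist_eq_norm, add_sub_cancel_right, mul_smul]
    refine hj2.trans_lt ?_
    rw [div_lt_iff₀ (by positivity)]
    rw [div_lt_iff₀ hδ] at hn
    push_cast
    nlinarith

lemma uniqErg (a : UnitAddCircle) (ha : addOrderOf a = 0) (ν : Measure UnitAddCircle)
    [IsProbabilityMeasure ν]
    (h : ν.map (fun x => a + x) = ν) : ν = volume := by
  have hd : DenseRange (fun n : ℤ => n • a) := AddCircle.denseRange_zsmul_iff.2 ha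
  have hf : ∀ f : C(UnitAddCircle, ℝ), ∀ t, ∫ x, f (t + x) ∂ν = ∫ x, f x ∂ν := by
    intro f
    have hstep : ∀ t, ∫ x, f (a + t + x) ∂ν = ∫ x, f (t + x) ∂ν := by
      intro t
      conv_rhs => rw [← h]
      rw [integral_map (by fun_prop) (by fun_prop)]
      congr 1; ext x; congr 1; abel
    have hc : Continuous (fun t => ∫ x, f (t + x) ∂ν) := by
      refine continuous_of_dominated (bound := fun _ => ‖f‖) (fun t => by fun_prop) ?_ (by fun_prop) ?_
      · intro t; exact Eventually.of_forall fun x => f.norm_coe_le_norm _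
      · exact Eventually.of_forall fun x => by fun_prop
    have hz : ∀ n : ℤ, ∫ x, f (n • a + x) ∂ν = ∫ x, f x ∂ν := by
      intro n
      induction n using Int.induction_on with
      | zero => simp
      | succ n ih => rw [← ih, ← hstep ((n:ℤ) • a)]; congr 1; ext x; rw [add_smul, one_smul]; congr 2; abel
      | pred n ih => rw [← ih, ← hstep ((-(n:ℤ) - 1) • a)]; congr 1; ext x; rw [sub_smul, one_smul]; congr 2; abel
    intro t
    have := hd.equalizer (g := fun t => ∫ x, f (t + x) ∂ν) (h := fun _ => ∫ x, f x ∂ν) hc continuous_const (by ext n; exact hz n)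
    exact congrFun this t
  have : ν.IsAddLeftInvariant := by
    constructor
    intro g
    have : IsProbabilityMeasure (ν.map (fun x => g + x)) :=
      Measure.isProbabilityMeasure_map (by fun_prop)
    apply ext_of_forall_integral_eq_of_IsFiniteMeasure
    intro f
    rw [integral_map (by fun_prop) (by fun_prop)]
    exact hf f.toContinuousMap g
  have h2 := Measure.isAddLeftInvariant_eq_smul_of_regular ν volume
  have h3 : ν Set.univ = (volume : Measure UnitAddCircle) Set.univ := by simp
  rw [h2] at h3 
  rw [Measure.smul_apply] at h3
  simp at h3
  rw [h2]
  ext s hs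
  rw [Measure.smul_apply, h3, one_smul]

lemma seqEx (a : UnitAddCircle) : ∃ (v : ℕ → C(UnitAddCircle, ℝ)) (n : ℕ → ℕ),
    StrictMono n ∧ (∀ k, 1 ≤ n k) ∧
    (∀ k x, |(∑ j ∈ Finset.range k, v j) (n k • a + x) - (∑ j ∈ Finset.range k, v j) x| ≤ 1) ∧
    (∀ k x, 0 ≤ v k x) ∧ (∀ k x, |v k (a + x) - v k x| ≤ (1/2)^k / n k) ∧
    (∀ k, volume {x | v k x ≠ 0} ≤ ENNReal.ofReal ((1/2)^k)) ∧
    (∀ k : ℕ, ENNReal.ofReal k ≤ ∫⁻ x, ENNReal.ofReal (Real.exp (1/(k+1) * v k x))) := by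
  choose N hN1 hN2 hN3 using retEx a
  have hb : ∀ n k : ℕ, ∃ v : C(UnitAddCircle, ℝ), 1 ≤ n → ((∀ x, 0 ≤ v x) ∧
      (∀ x, |v (a + x) - v x| ≤ (1/2)^k / n) ∧
      volume {x | v x ≠ 0} ≤ ENNReal.ofReal ((1/2)^k) ∧
      ENNReal.ofReal k ≤ ∫⁻ x, ENNReal.ofReal (Real.exp (1/(k+1) * v x))) := by
    intro n k
    by_cases hn : 1 ≤ n
    · have hn' : (0:ℝ) < n := by exact_mod_cast hn
      obtain ⟨v, hv⟩ := bumpEx a ((1/2)^k / n) ((1/2)^k) (1/(k+1)) k (by positivity)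
        (by positivity) (pow_le_one₀ (by norm_num) (by norm_num)) (by positivity)
      exact ⟨v, fun _ => hv⟩
    · exact ⟨0, fun h => absurd h hn⟩
  choose B hB using hb
  let S : ℕ → C(UnitAddCircle, ℝ) × ℕ := fun k => Nat.rec (0, 1)
    (fun k s => (s.1 + B s.2 k, N (s.1 + B s.2 k) (s.2 + 1))) k
  have hS0 : S 0 = (0, 1) := rfl
  have hS : ∀ k, S (k+1) = ((S k).1 + B (S k).2 k, N ((S k).1 + B (S k).2 k) ((S k).2 + 1)) :=
    fun k => rfl
  have hsum : ∀ k, ∑ j ∈ Finset.range k, B (S j).2 j = (S k).1 := by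
    intro k
    induction k with
    | zero => rfl
    | succ k ih => rw [Finset.sum_range_succ, ih, hS]
  have hn1 : ∀ k, 1 ≤ (S k).2 := by
    intro k
    cases k with
    | zero => rfl
    | succ k => rw [hS]; exact hN2 _ _
  refine ⟨fun k => B (S k).2 k, fun k => (S k).2, ?_, hn1, ?_, fun k => (hB _ k (hn1 k)).1,
    fun k => (hB _ k (hn1 k)).2.1, fun k => (hB _ k (hn1 k)).2.2.1,
    fun k => (hB _ k (hn1 k)).2.2.2⟩
  · apply strictMono_nat_of_lt_succ
    intro k
    rw [hS]
    have := hN1 ((S k).1 + B (S k).2 k) ((S k).2 + 1)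
    simp only; omega
  · intro k x
    simp only
    rw [hsum]
    cases k with
    | zero => rw [hS0]; simp
    | succ k => rw [hS]; exact hN3 _ _ x

set_option maxHeartbeats 1000000 in
lemma cobEx (a : UnitAddCircle) : ∃ (F : UnitAddCircle → ℝ) (V : ℕ → C(UnitAddCircle, ℝ))
    (n : ℕ → ℕ) (w : UnitAddCircle → ℝ), Continuous F ∧ StrictMono n ∧ (∀ k, 1 ≤ n k) ∧
    (∀ k x, |F x - (V k x - V k (a + x))| ≤ 2 / n k) ∧
    (∀ k x, |V k (n k • a + x) - V k x| ≤ 1) ∧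
    Measurable w ∧ (∀ x, 0 ≤ w x) ∧ (∀ᵐ x, F x = w x - w (a + x)) ∧
    ∀ β : ℝ, 0 < β → ∫⁻ x, ENNReal.ofReal (Real.exp (β * w x)) = ⊤ := by
  obtain ⟨v, n, hn, hn1, hV, hv0, hvd, hvs, hvi⟩ := seqEx a
  have hn1' : ∀ k, (1:ℝ) ≤ n k := fun k => by exact_mod_cast hn1 k
  have hgs : Summable (fun k : ℕ => ((1:ℝ)/2)^k) := summable_geometric_two
  have hd : ∀ k x, ‖v k x - v k (a + x)‖ ≤ (1/2)^k := by
    intro k x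
    rw [Real.norm_eq_abs, abs_sub_comm]
    refine (hvd k x).trans (div_le_self (by positivity) (hn1' k))
  have hsm : ∀ x, Summable (fun k => v k x - v k (a + x)) := fun x =>
    Summable.of_norm_bounded hgs (fun k => hd k x)
  have hfin : ∀ᵐ x, ∀ᶠ k in atTop, v k x = 0 := by
    have := ae_eventually_notMem (μ := (volume : Measure UnitAddCircle))
      (s := fun k => {x | v k x ≠ 0}) ?_
    · filter_upwards [this] with x hx
      filter_upwards [hx] with k hk
      simpa using hk
    · refine ne_top_of_le_ne_top ?_ (ENNReal.tsum_le_tsum hvs)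
      rw [← ENNReal.ofReal_tsum_of_nonneg (fun k => by positivity) hgs]
      exact ENNReal.ofReal_ne_top
  have hfin2 : ∀ᵐ x, Summable (fun k => v k x) := by
    filter_upwards [hfin] with x hx
    obtain ⟨K, hK⟩ := eventually_atTop.1 hx
    exact summable_of_ne_finset_zero (s := Finset.range K)
      (fun k hk => hK k (by simpa using hk))
  have hfin3 : ∀ᵐ x, Summable (fun k => v k (a + x)) :=
    (measurePreserving_add_left volume a).quasiMeasurePreserving.ae
      (p := fun y => Summable (fun k => v k y)) hfin2
  refine ⟨fun x => ∑' k, (v k x - v k (a + x)), fun k => ∑ j ∈ Finset.range k, v j, n,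
    fun x => ∑' k, v k x, ?_, hn, hn1, ?_, hV, ?_, ?_, ?_, ?_⟩
  · exact continuous_tsum (fun k => by fun_prop) hgs hd
  · intro k x
    have h1 := (hsm x).sum_add_tsum_nat_add k
    have h2 : ∑' k, (v k x - v k (a + x)) - ((∑ j ∈ Finset.range k, v j) x -
        (∑ j ∈ Finset.range k, v j) (a + x)) = ∑' j, (v (j+k) x - v (j+k) (a + x)) := by
      rw [← h1]; simp [ContinuousMap.coe_sum, Finset.sum_sub_distrib]
    rw [h2, ← Real.norm_eq_abs]
    have h3 : HasSum (fun j : ℕ => ((1:ℝ)/2)^j / n k) (2 / n k) :=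
      hasSum_geometric_two.div_const _
    apply tsum_of_norm_bounded h3
    intro j
    rw [Real.norm_eq_abs, abs_sub_comm]
    refine (hvd _ x).trans ?_
    have h4 : (n k : ℝ) ≤ n (j+k) := by exact_mod_cast hn.monotone (Nat.le_add_left k j)
    have h5 := hn1' k
    have h6 : ((1:ℝ)/2)^(j+k) ≤ (1/2)^j :=
      pow_le_pow_of_le_one (by norm_num) (by norm_num) (Nat.le_add_right j k)
    gcongr
  · exact Measurable.tsum fun k => (v k).continuous.measurable
  · exact fun x => tsum_nonneg fun k => hv0 k x
  · filter_upwards [hfin2, hfin3] with x h1 h2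
    exact h1.tsum_sub h2
  · intro β hβ
    apply ENNReal.eq_top_of_forall_nnreal_le
    intro r
    obtain ⟨k, hk⟩ := exists_nat_ge (max (r:ℝ) (1/β))
    have hk1 : (r:ℝ) ≤ k := (le_max_left _ _).trans hk
    have hk2 : 1/β ≤ k := (le_max_right _ _).trans hk
    have h3 : (r : ENNReal) ≤ ENNReal.ofReal k := by
      rw [← ENNReal.ofReal_coe_nnreal]; exact ENNReal.ofReal_le_ofReal hk1
    refine h3.trans ((hvi k).trans (lintegral_mono_ae ?_))
    filter_upwards [hfin2] with x hx
    apply ENNReal.ofReal_le_ofReal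
    apply Real.exp_le_exp.2
    have h4 : v k x ≤ ∑' k, v k x := hx.le_tsum k (fun j _ => hv0 j x)
    have h5 : 1 / ((k:ℝ)+1) ≤ β := by
      rw [div_le_iff₀ (by positivity)]
      rw [div_le_iff₀ hβ] at hk2
      nlinarith
    exact mul_le_mul h5 h4 (hv0 k x) hβ.le

lemma conf_map (a : UnitAddCircle) (F : UnitAddCircle → ℝ) (hF : Continuous F) (β : ℝ)
    (m : Measure UnitAddCircle) (h : IsConformalMeasure (Homeomorph.addLeft a) F β m) :
    m = (m.withDensity (fun x => ENNReal.ofReal (Real.exp (β * F x)))).map (fun x => a + x) := by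
  obtain ⟨hm, h⟩ := h
  have hE : Continuous (fun x => Real.exp (β * F x)) := by fun_prop
  have hI : Integrable (fun x => Real.exp (β * F x)) m :=
    hE.integrable_of_hasCompactSupport (HasCompactSupport.of_compactSpace _)
  have : IsFiniteMeasure (m.withDensity (fun x => ENNReal.ofReal (Real.exp (β * F x)))) :=
    isFiniteMeasure_withDensity_ofReal hI.2
  apply ext_of_forall_integral_eq_of_IsFiniteMeasure
  intro f
  rw [integral_map (by fun_prop) (by fun_prop), h f f.continuous,
    integral_withDensity_eq_integral_toReal_smul (by fun_prop)
      (Eventually.of_forall fun x => ENNReal.ofReal_lt_top)]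
  congr 1; ext x
  rw [ENNReal.toReal_ofReal (Real.exp_pos _).le, smul_eq_mul, mul_comm]
  rfl

lemma conf_of_cob (a : UnitAddCircle) (F w : UnitAddCircle → ℝ) (β : ℝ) (hw : Measurable w)
    (hF : ∀ᵐ x, F x = w x - w (a + x))
    (hZ : ∫⁻ x, ENNReal.ofReal (Real.exp (-β * w x)) ≠ ⊤) :
    IsConformalMeasure (Homeomorph.addLeft a) F β
      ((∫⁻ x, ENNReal.ofReal (Real.exp (-β * w x)))⁻¹ •
        (volume.withDensity (fun x => ENNReal.ofReal (Real.exp (-β * w x))))) := by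
  have hD : Measurable (fun x => ENNReal.ofReal (Real.exp (-β * w x))) := by fun_prop
  have hZ0 : ∫⁻ x, ENNReal.ofReal (Real.exp (-β * w x)) ≠ 0 := by
    intro h0
    rw [lintegral_eq_zero_iff hD] at h0
    obtain ⟨x, hx⟩ := h0.exists
    simp at hx
    exact absurd hx (not_le.2 (Real.exp_pos _))
  refine ⟨⟨?_⟩, ?_⟩
  · rw [Measure.smul_apply, withDensity_apply _ MeasurableSet.univ, Measure.restrict_univ,
      smul_eq_mul, ENNReal.inv_mul_cancel hZ0 hZ]
  · intro f hf
    rw [integral_smul_measure, integral_smul_measure,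
      integral_withDensity_eq_integral_toReal_smul hD
        (Eventually.of_forall fun x => ENNReal.ofReal_lt_top),
      integral_withDensity_eq_integral_toReal_smul hD
        (Eventually.of_forall fun x => ENNReal.ofReal_lt_top)]
    congr 1
    rw [← integral_add_left_eq_self _ a]
    apply integral_congr_ae
    filter_upwards [hF] with x hx
    rw [ENNReal.toReal_ofReal (Real.exp_pos _).le, ENNReal.toReal_ofReal (Real.exp_pos _).le,
      smul_eq_mul, smul_eq_mul, hx]
    have : Real.exp (-β * w (a + x)) = Real.exp (-β * w x) * Real.exp (β * (w x - w (a + x))) := by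
      rw [← Real.exp_add]; congr 1; ring
    rw [this]
    change _ * f (a + x) = _ * (f (a + x) * _)
    ring

lemma ac_conf (a : UnitAddCircle) (ha : addOrderOf a = 0) (F w : UnitAddCircle → ℝ)
    (hFc : Continuous F) (β : ℝ)
    (hw : Measurable w) (hF : ∀ᵐ x, F x = w x - w (a + x)) (m : Measure UnitAddCircle)
    (h : IsConformalMeasure (Homeomorph.addLeft a) F β m) (hac : m ≪ volume) :
    ∃ c : ENNReal, m = c • volume.withDensity (fun x => ENNReal.ofReal (Real.exp (-β * w x))) := by
  have hmap := conf_map a F hFc β m h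
  have hp : IsProbabilityMeasure m := h.1
  set E : UnitAddCircle → ENNReal := fun x => ENNReal.ofReal (Real.exp (β * F x)) with hEdef
  have hE : Measurable E := by fun_prop
  set g := m.rnDeriv volume with hg
  have hgm : Measurable g := Measure.measurable_rnDeriv _ _
  have hwd : volume.withDensity g = m := Measure.withDensity_rnDeriv_eq _ _ hac
  have hmp := measurePreserving_add_left (volume : Measure UnitAddCircle) a
  have heq : volume.withDensity (fun x => g (a + x)) = volume.withDensity (g * E) := by
    ext s hs
    let t := (fun x => -a + x) ⁻¹' s
    have ht : MeasurableSet t := (measurable_const_add (-a)) hs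
    have hts : (fun x => a + x) ⁻¹' t = s := by ext x; simp [t]
    have h1 : ∫⁻ x in s, g (a + x) = m t := by
      rw [← hts, hmp.setLIntegral_comp_preimage ht hgm, ← withDensity_apply _ ht, hwd]
    rw [withDensity_apply _ hs, h1, hmap, Measure.map_apply (by fun_prop) ht, hts,
      withDensity_mul _ hgm hE, hwd]
  rw [withDensity_eq_iff (by fun_prop) (by fun_prop)] at heq
  swap
  · rw [hmp.lintegral_comp hgm, ← setLIntegral_univ, ← withDensity_apply _ MeasurableSet.univ, hwd]
    simp
  have herg : Ergodic (fun x => a + x) (volume : Measure UnitAddCircle) :=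
    AddCircle.ergodic_add_left.2 ha
  obtain ⟨c, hc⟩ := herg.ae_eq_const_of_ae_eq_comp₀
    (g := fun x => g x * ENNReal.ofReal (Real.exp (β * w x)))
    (Measurable.nullMeasurable (by fun_prop)) (by
      filter_upwards [heq, hF] with x h1 h2
      simp only [Function.comp]
      rw [h1, Pi.mul_apply, mul_assoc, hEdef]
      simp only
      rw [← ENNReal.ofReal_mul (Real.exp_pos _).le, ← Real.exp_add, h2]
      congr 3; ring)
  refine ⟨c, ?_⟩
  rw [← withDensity_smul _ (by fun_prop), ← hwd]
  apply withDensity_congr_ae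
  filter_upwards [hc] with x hx
  simp only [Function.const] at hx
  rw [Pi.smul_apply, smul_eq_mul, ← hx, mul_assoc, ← ENNReal.ofReal_mul (Real.exp_pos _).le,
    ← Real.exp_add]
  simp

lemma no_atom (a : UnitAddCircle) (ha : addOrderOf a = 0) (F : UnitAddCircle → ℝ)
    (hFc : Continuous F) (β : ℝ) (V : ℕ → C(UnitAddCircle, ℝ)) (n : ℕ → ℕ) (hn : StrictMono n)
    (hn1 : ∀ k, 1 ≤ n k) (hFV : ∀ k x, |F x - (V k x - V k (a + x))| ≤ 2 / n k)
    (hV : ∀ k x, |V k (n k • a + x) - V k x| ≤ 1) (m : Measure UnitAddCircle)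
    (h : IsConformalMeasure (Homeomorph.addLeft a) F β m) (x : UnitAddCircle) : m {x} = 0 := by
  have hmap := conf_map a F hFc β m h
  have hp : IsProbabilityMeasure m := h.1
  have h1 : ∀ y, m {a + y} = ENNReal.ofReal (Real.exp (β * F y)) * m {y} := by
    intro y
    conv_lhs => rw [hmap]
    rw [Measure.map_apply (by fun_prop) (measurableSet_singleton _)]
    have : (fun x => a + x) ⁻¹' {a + y} = {y} := by ext z; simp
    rw [this, withDensity_apply _ (measurableSet_singleton _), lintegral_singleton]
  have h2 : ∀ N : ℕ, m {N • a + x} =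
      ENNReal.ofReal (Real.exp (β * ∑ i ∈ Finset.range N, F (i • a + x))) * m {x} := by
    intro N
    induction N with
    | zero => simp
    | succ N ih =>
      have : (N + 1) • a + x = a + (N • a + x) := by rw [succ_nsmul]; abel
      rw [this, h1, ih, ← mul_assoc, ← ENNReal.ofReal_mul (Real.exp_pos _).le, ← Real.exp_add,
        Finset.sum_range_succ, mul_add, add_comm (β * F _)]
  have h3 : ∀ k N, |∑ i ∈ Finset.range N, F (i • a + x) - (V k x - V k (N • a + x))| ≤
      N * (2 / n k) := by
    intro k N
    induction N with
    | zero => simp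
    | succ N ih =>
      have e : (N + 1) • a + x = a + (N • a + x) := by rw [succ_nsmul]; abel
      rw [e, Finset.sum_range_succ]
      have h4 := hFV k (N • a + x)
      rw [abs_le] at *
      push_cast
      constructor <;> linarith [ih.1, ih.2, h4.1, h4.2]
  have h4 : ∀ k, |∑ i ∈ Finset.range (n k), F (i • a + x)| ≤ 3 := by
    intro k
    have h5 := h3 k (n k)
    have h6 := hV k x
    have h7 : (n k : ℝ) * (2 / n k) = 2 := by
      have : (0:ℝ) < n k := by exact_mod_cast hn1 k
      field_simp
    rw [h7] at h5
    rw [abs_le] at *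
    constructor <;> linarith [h5.1, h5.2, h6.1, h6.2]
  by_contra hx
  have hinj : Function.Injective (fun k => n k • a + x) := by
    intro i j hij
    simp only [add_left_inj] at hij
    apply hn.injective
    exact injective_nsmul_iff_not_isOfFinAddOrder.2 (addOrderOf_eq_zero_iff.1 ha) hij
  have hinf := Set.infinite_range_of_injective hinj
  have := hinf.meas_eq_top (μ := m) ⟨ENNReal.ofReal (Real.exp (-(|β| * 3))) * m {x}, ?_, ?_⟩
  · exact measure_ne_top m _ this
  · apply mul_ne_zero _ hx
    simpa using Real.exp_pos _
  · rintro _ ⟨k, rfl⟩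
    simp only
    rw [h2]
    gcongr
    have h8 := neg_abs_le (β * ∑ i ∈ Finset.range (n k), F (i • a + x))
    rw [abs_mul] at h8
    have := mul_le_mul_of_nonneg_left (h4 k) (abs_nonneg β)
    linarith

lemma conf_exists (a : UnitAddCircle) (F : UnitAddCircle → ℝ)
    (hFc : Continuous F) (β : ℝ) (V : ℕ → C(UnitAddCircle, ℝ)) (n : ℕ → ℕ) (hn : StrictMono n)
    (hFV : ∀ k x, |F x - (V k x - V k (a + x))| ≤ 2 / n k) :
    ∃ m, IsConformalMeasure (Homeomorph.addLeft a) F β m := by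
  have hk : ∀ k, ∃ m, IsConformalMeasure (Homeomorph.addLeft a) 
      (fun x => V k x - V k (a + x)) β m := by
    intro k
    refine ⟨_, conf_of_cob a _ (V k) β (by fun_prop) (Eventually.of_forall fun x => rfl) ?_⟩
    have hI : Integrable (fun x => Real.exp (-β * V k x)) (volume : Measure UnitAddCircle) :=
      Continuous.integrable_of_hasCompactSupport (by fun_prop) (HasCompactSupport.of_compactSpace _)
    rw [← ofReal_integral_eq_lintegral_ofReal hI
      (Eventually.of_forall fun x => (Real.exp_pos _).le)]
    exact ENNReal.ofReal_ne_top
  choose m hm using hk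
  let P : ℕ → ProbabilityMeasure UnitAddCircle := fun k => ⟨m k, (hm k).1⟩
  obtain ⟨p, -, hp⟩ := (isCompact_univ (X := ProbabilityMeasure UnitAddCircle)).ultrafilter_le_nhds
    ((hyperfilter ℕ).map P) (by simp)
  have hp' : Tendsto P (hyperfilter ℕ) (𝓝 p) := hp
  rw [ProbabilityMeasure.tendsto_iff_forall_integral_tendsto] at hp'
  refine ⟨p, p.2, fun f hf => ?_⟩
  have hn0 : Tendsto (fun k => (2:ℝ) / n k) atTop (𝓝 0) :=
    Tendsto.div_atTop tendsto_const_nhds (tendsto_natCast_atTop_atTop.comp hn.tendsto_atTop)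
  let g : C(UnitAddCircle, ℝ) := ⟨fun x => f (a + x) * Real.exp (β * F x), by fun_prop⟩
  have t1 := hp' (BoundedContinuousFunction.mkOfCompact ⟨f, hf⟩)
  have t2 := hp' (BoundedContinuousFunction.mkOfCompact g)
  have t3 : Tendsto (fun k => ∫ x, f x ∂(m k) - ∫ x, g x ∂(m k)) atTop (𝓝 0) := by
    have hlim : Tendsto (fun k => ‖g‖ * (2 * (|β| * (2 / n k)))) atTop (𝓝 0) := by
      have := ((hn0.const_mul |β|).const_mul 2).const_mul ‖g‖
      simpa using this
    apply squeeze_zero_norm' _ hlim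
    have hsmall : ∀ᶠ k in atTop, |β| * (2 / n k) ≤ 1 := by
      have := hn0.const_mul |β|
      rw [mul_zero] at this
      exact (this.eventually_lt_const one_pos).mono fun _ h => h.le
    filter_upwards [hsmall] with k hk
    have := (hm k).1
    have i1 : Integrable (fun x => f (a + x) * Real.exp (β * (V k x - V k (a + x)))) (m k) :=
      Continuous.integrable_of_hasCompactSupport (by fun_prop) (HasCompactSupport.of_compactSpace _)
    have i2 : Integrable g (m k) :=
      g.continuous.integrable_of_hasCompactSupport (HasCompactSupport.of_compactSpace _)
    have hc : ∫ x, f x ∂(m k) = ∫ x, f (a + x) * Real.exp (β * (V k x - V k (a + x))) ∂(m k) :=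
      (hm k).2 f hf
    rw [hc, ← integral_sub i1 i2]
    have hb : ∀ x, ‖f (a + x) * Real.exp (β * (V k x - V k (a + x))) - g x‖ ≤
        ‖g‖ * (2 * (|β| * (2 / n k))) := by
      intro x
      have e : f (a + x) * Real.exp (β * (V k x - V k (a + x))) - g x =
          g x * (Real.exp (β * (V k x - V k (a + x) - F x)) - 1) := by
        simp only [g, ContinuousMap.coe_mk]
        have e2 : Real.exp (β * (V k x - V k (a + x))) =
            Real.exp (β * F x) * Real.exp (β * (V k x - V k (a + x) - F x)) := by
          rw [← Real.exp_add]; congr 1; ring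
        rw [e2]; ring
      have h1 : |β * (V k x - V k (a + x) - F x)| ≤ |β| * (2 / n k) := by
        rw [abs_mul, abs_sub_comm _ (F x)]
        exact mul_le_mul_of_nonneg_left (hFV k x) (abs_nonneg _)
      rw [e, norm_mul]
      apply mul_le_mul (g.norm_coe_le_norm x) _ (norm_nonneg _) (norm_nonneg _)
      refine (Real.abs_exp_sub_one_le (h1.trans hk)).trans ?_
      linarith
    have := norm_integral_le_of_norm_le_const (μ := m k) (Eventually.of_forall hb)
    simpa using this
  have t4 := t3.mono_left Nat.hyperfilter_le_atTop
  have t5 := tendsto_nhds_unique t4 (t1.sub t2)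
  have : ∫ x, f x ∂(p : Measure UnitAddCircle) = ∫ x, g x ∂(p : Measure UnitAddCircle) := by
    have := t5.symm
    rw [sub_eq_zero] at this
    exact this
  exact this

theorem stmt19 (α : ℝ) (hα : Irrational α) :
    ∃ F : UnitAddCircle → ℝ, Continuous F ∧
      (∀ β : ℝ, ∃ m : Measure UnitAddCircle,
        IsConformalMeasure (Homeomorph.addLeft ((α : UnitAddCircle))) F β m) ∧
      (∀ β : ℝ, ∀ m : Measure UnitAddCircle,
        IsConformalMeasure (Homeomorph.addLeft ((α : UnitAddCircle))) F β m →
          ∀ x : UnitAddCircle, m {x} = 0) ∧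
      (∀ β : ℝ, 0 ≤ β → ∃! m : Measure UnitAddCircle,
        IsConformalMeasure (Homeomorph.addLeft ((α : UnitAddCircle))) F β m ∧
        IsErgodicMeasure (Homeomorph.addLeft ((α : UnitAddCircle))) m ∧
        ∃ ν : Measure UnitAddCircle, IsProbabilityMeasure ν ∧
          IsInvariantMeasure (Homeomorph.addLeft ((α : UnitAddCircle))) ν ∧
          m ≪ ν ∧ ν ≪ m) ∧
      (∀ β : ℝ, β < 0 → ∀ m : Measure UnitAddCircle,
        IsConformalMeasure (Homeomorph.addLeft ((α : UnitAddCircle))) F β m →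
          ¬ ∃ ν : Measure UnitAddCircle, IsProbabilityMeasure ν ∧
            IsInvariantMeasure (Homeomorph.addLeft ((α : UnitAddCircle))) ν ∧
            m ≪ ν ∧ ν ≪ m) := by
  have ha : addOrderOf (α : UnitAddCircle) = 0 := by
    rw [← AddCircle.denseRange_zsmul_iff, AddCircle.denseRange_zsmul_coe_iff]
    simpa using hα
  generalize (α : UnitAddCircle) = a at ha
  obtain ⟨F, V, n, w, hFc, hn, hn1, hFV, hV, hw, hw0, hF, htop⟩ := cobEx a
  have hcoe : ⇑(Homeomorph.addLeft a) = fun x => a + x := rfl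
  have hinv : ∀ ν : Measure UnitAddCircle, IsProbabilityMeasure ν →
      IsInvariantMeasure (Homeomorph.addLeft a) ν → ν = volume := by
    intro ν h1 h2
    apply uniqErg a ha
    ext s hs
    rw [Measure.map_apply (by fun_prop) hs]
    exact h2 s hs
  refine ⟨F, hFc, fun β => conf_exists a F hFc β V n hn hFV,
    fun β m hm x => no_atom a ha F hFc β V n hn hn1 hFV hV m hm x, ?_, ?_⟩
  · intro β hβ
    have hD : Measurable (fun x => ENNReal.ofReal (Real.exp (-β * w x))) := by fun_prop
    have hZ : ∫⁻ x, ENNReal.ofReal (Real.exp (-β * w x)) ≠ ⊤ := by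
      have : ∫⁻ x, ENNReal.ofReal (Real.exp (-β * w x)) ≤ ∫⁻ x : UnitAddCircle, 1 := by
        apply lintegral_mono
        intro x
        simp only [ENNReal.ofReal_le_one, Real.exp_le_one_iff]
        nlinarith [mul_nonneg hβ (hw0 x)]
      refine ne_top_of_le_ne_top ?_ this
      simp
    have hac1 : ((∫⁻ x, ENNReal.ofReal (Real.exp (-β * w x)))⁻¹ •
        (volume.withDensity (fun x => ENNReal.ofReal (Real.exp (-β * w x))))) ≪
        (volume : Measure UnitAddCircle) :=
      (withDensity_absolutelyContinuous _ _).smul_left _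
    have hac2 : (volume : Measure UnitAddCircle) ≪
        ((∫⁻ x, ENNReal.ofReal (Real.exp (-β * w x)))⁻¹ •
        (volume.withDensity (fun x => ENNReal.ofReal (Real.exp (-β * w x))))) := by
      refine Measure.AbsolutelyContinuous.trans (withDensity_absolutelyContinuous' hD.aemeasurable
        (Eventually.of_forall fun x => ?_))
        (Measure.absolutelyContinuous_smul (ENNReal.inv_ne_zero.2 hZ))
      simpa using Real.exp_pos _
    refine ⟨_, ⟨conf_of_cob a F w β hw hF hZ, ?_, volume, ⟨by simp⟩, ?_, hac1, hac2⟩, ?_⟩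
    · intro B hB hBi
      have herg : Ergodic (fun x => a + x) (volume : Measure UnitAddCircle) :=
        AddCircle.ergodic_add_left.2 ha
      rcases herg.toPreErgodic.measure_self_or_compl_eq_zero hB hBi with h | h
      · exact Or.inl (hac1 h)
      · exact Or.inr (hac1 h)
    · intro B hB
      exact (measurePreserving_add_left volume a).measure_preimage hB.nullMeasurableSet
    · rintro m ⟨hm, -, ν, hν1, hν2, hν3, -⟩
      rw [hinv ν hν1 hν2] at hν3
      obtain ⟨c, hc⟩ := ac_conf a ha F w hFc β hw hF m hm hν3
      have hp := hm.1.measure_univ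
      rw [hc, Measure.smul_apply, withDensity_apply _ MeasurableSet.univ, Measure.restrict_univ,
        smul_eq_mul] at hp
      rw [hc, ENNReal.eq_inv_of_mul_eq_one_left hp]
  · rintro β hβ m hm ⟨ν, hν1, hν2, hν3, -⟩
    rw [hinv ν hν1 hν2] at hν3
    obtain ⟨c, hc⟩ := ac_conf a ha F w hFc β hw hF m hm hν3
    have hp := hm.1.measure_univ
    rw [hc, Measure.smul_apply, withDensity_apply _ MeasurableSet.univ, Measure.restrict_univ,
      smul_eq_mul, htop (-β) (by linarith)] at hp
    by_cases h0 : c = 0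
    · simp [h0] at hp
    · rw [ENNReal.mul_top h0] at hp
      exact ENNReal.top_ne_one hp
end
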